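/- arXiv:2311.10008 — 3 statements merged into one kernel-verified Lean document; each statement's English description precedes it below -/
import Mathlib

section
/- Let χ be a non-trivial Dirichlet character modulo 18. There exists a constant C > 0 such that for all real x ≥ 2, the absolute value of the sum of χ(n) over all positive integers n ≤ x, all of whose prime factors are congruent to 2 modulo 3, is at most C·x/log x. -/
section

open MeasureTheory FourierTransform

lemma plancherel_ae {f : ℝ → ℂ} (h1 : Integrable f) (h2 : MemLp f 2) :
    ((𝓕 (h2.toLp f) : Lp (α := ℝ) ℂ 2 volume) : ℝ → ℂ) =ᵐ[volume] 𝓕 f := by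
  have hcont : Continuous (𝓕 f) := by
    apply VectorFourier.fourierIntegral_continuous Real.continuous_fourierChar (by fun_prop) h1
  apply ae_eq_of_integral_contDiff_smul_eq
  · exact (Lp.memLp _).locallyIntegrable (by norm_num)
  · exact hcont.locallyIntegrable
  intro g hg hgc
  have hg1 : ContDiff ℝ ((⊤ : ℕ∞) : WithTop ℕ∞) (fun x => (g x : ℂ)) := Complex.ofRealCLM.contDiff.comp hg
  have hg2 : HasCompactSupport (fun x => (g x : ℂ)) := hgc.comp_left (g := fun x : ℝ => (x : ℂ)) (by simp)
  set G : SchwartzMap ℝ ℂ := hg2.toSchwartzMap hg1 with hG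
  have e1 : (𝓕 (h2.toLp f : TemperedDistribution ℝ ℂ)) G
      = ∫ x, G x • (((𝓕 (h2.toLp f) : Lp (α := ℝ) ℂ 2 volume) : ℝ → ℂ)) x := by
    rw [Lp.fourier_toTemperedDistribution_eq, Lp.toTemperedDistribution_apply]
  have e2 : (𝓕 (h2.toLp f : TemperedDistribution ℝ ℂ)) G = ∫ x, G x • 𝓕 f x := by
    rw [TemperedDistribution.fourier_apply, Lp.toTemperedDistribution_apply]
    have := VectorFourier.integral_fourierIntegral_smul_eq_flip (f := (G : ℝ → ℂ)) (g := f)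
      (L := innerₗ ℝ) (μ := volume) (ν := volume)
      Real.continuous_fourierChar (by fun_prop) G.integrable h1
    rw [flip_innerₗ] at this
    refine Eq.trans ?_ this
    apply integral_congr_ae
    filter_upwards [h2.coeFn_toLp] with x hx
    rw [hx, SchwartzMap.fourier_coe]
    rfl
  have := e1.symm.trans e2
  simpa [hG] using this

lemma plancherel {f : ℝ → ℂ} (h1 : Integrable f) (h2 : MemLp f 2) :
    ∫ x, ‖f x‖ ^ 2 = ∫ x, ‖𝓕 f x‖ ^ 2 := by
  have key : ‖(𝓕 (h2.toLp f) : Lp (α := ℝ) ℂ 2 volume)‖ = ‖h2.toLp f‖ := Lp.norm_fourier_eq _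
  have hn : ∀ F : Lp (α := ℝ) ℂ 2 volume, ‖F‖ ^ 2 = ∫ x, ‖F x‖ ^ 2 := by
    intro F
    have := @L2.inner_def ℝ ℂ ℂ _ _ volume _ _ F F
    rw [inner_self_eq_norm_sq_to_K] at this
    have h : ((∫ x, ‖F x‖ ^ 2 : ℝ) : ℂ) = ∫ x, inner ℂ (F x) (F x) := by
      rw [← integral_complex_ofReal]
      congr 1; ext x
      rw [inner_self_eq_norm_sq_to_K]; simp
    rw [← h] at this
    apply Complex.ofReal_injective
    simpa using this
  have a := hn (h2.toLp f)
  have b := hn (𝓕 (h2.toLp f))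
  rw [key, a] at b
  have a' : ∫ x, ‖(h2.toLp f) x‖ ^ 2 = ∫ x, ‖f x‖ ^ 2 := by
    apply integral_congr_ae
    filter_upwards [h2.coeFn_toLp] with x hx
    rw [hx]
  have b' : ∫ x, ‖(𝓕 (h2.toLp f) : Lp (α := ℝ) ℂ 2 volume) x‖ ^ 2 = ∫ x, ‖𝓕 f x‖ ^ 2 := by
    apply integral_congr_ae
    filter_upwards [plancherel_ae h1 h2] with x hx
    rw [hx]
  rw [← a', b, b']

end

section

open MeasureTheory Complex Filter Topology

lemma sum_range_period {q : ℕ} [NeZero q] (Φ : ZMod q → ℂ) (N : ℕ) :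
    ∑ k ∈ Finset.range q, Φ ((N + k : ℕ) : ZMod q) = ∑ a, Φ a := by
  refine Finset.sum_bij (fun k _ => ((N + k : ℕ) : ZMod q)) (fun _ _ => Finset.mem_univ _) ?_ ?_ (fun _ _ => rfl)
  · intro a ha b hb h
    simp only [Finset.mem_range] at ha hb
    rw [ZMod.natCast_eq_natCast_iff] at h
    have := Nat.ModEq.add_left_cancel' N h
    rw [Nat.ModEq, Nat.mod_eq_of_lt ha, Nat.mod_eq_of_lt hb] at this
    exact this
  · intro b _
    refine ⟨(b - N).val, Finset.mem_range.mpr (ZMod.val_lt _), ?_⟩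
    simp

lemma partial_sum_bound {q : ℕ} [NeZero q] (Φ : ZMod q → ℂ) :
    ∃ C : ℝ, 0 < C ∧ ∀ N M : ℕ, N ≤ M →
      ‖∑ k ∈ Finset.Ioc N M, Φ (k : ZMod q) - ((∑ a, Φ a) / q) * ((M : ℂ) - N)‖ ≤ C := by
  set κ : ℂ := (∑ a, Φ a) / q
  set g : ℕ → ℂ := fun N => ∑ k ∈ Finset.range N, Φ ((k + 1 : ℕ) : ZMod q) - κ * N with hg
  have hq : (q : ℂ) ≠ 0 := by exact_mod_cast NeZero.ne q
  have hper : Function.Periodic g q := by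
    intro N
    simp only [hg]
    rw [Finset.sum_range_add]
    have : ∑ x ∈ Finset.range q, Φ ((N + x + 1 : ℕ) : ZMod q) = ∑ a, Φ a := by
      rw [← sum_range_period Φ (N + 1)]
      apply Finset.sum_congr rfl
      intro x _
      congr 2
      ring
    rw [this]
    push_cast
    have : κ * q = ∑ a, Φ a := by simp only [κ]; field_simp
    linear_combination -this
  have hb : ∃ C : ℝ, ∀ N, ‖g N‖ ≤ C := by
    refine ⟨∑ r ∈ Finset.range q, ‖g r‖, fun N => ?_⟩
    rw [← hper.map_mod_nat N]
    exact Finset.single_le_sum (f := fun r => ‖g r‖) (fun _ _ => norm_nonneg _)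
      (Finset.mem_range.mpr (Nat.mod_lt _ (NeZero.pos q)))
  obtain ⟨C, hC⟩ := hb
  have hC0 : 0 ≤ C := (norm_nonneg _).trans (hC 0)
  refine ⟨2 * C + 1, by linarith, fun N M h => ?_⟩
  have e : ∑ k ∈ Finset.Ioc N M, Φ (k : ZMod q) - κ * ((M : ℂ) - N) = g M - g N := by
    simp only [hg]
    have h1 : ∑ k ∈ Finset.Ioc N M, Φ (k : ZMod q) = ∑ k ∈ Finset.Ico N M, Φ ((k + 1 : ℕ) : ZMod q) := by
      rw [Finset.sum_Ico_add' (fun k : ℕ => Φ (k : ZMod q)) N M 1]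
      apply Finset.sum_congr _ (fun _ _ => rfl)
      ext k; simp
    rw [h1, Finset.sum_Ico_eq_sub _ h]
    ring
  rw [e]
  calc _ ≤ ‖g M‖ + ‖g N‖ := norm_sub_le _ _
    _ ≤ _ := by linarith [hC M, hC N]

end

section

open MeasureTheory Complex Filter Topology

/-- mean value of a character -/
noncomputable def kap {q : ℕ} [NeZero q] (η : DirichletCharacter ℂ q) : ℂ := (∑ a, η a) / q

noncomputable def Bf {q : ℕ} [NeZero q] (η : DirichletCharacter ℂ q) (N : ℕ) (u : ℝ) : ℂ :=
  (Set.Ioi (N : ℝ)).indicator (fun u : ℝ => ∑ k ∈ Finset.Ioc N ⌊u⌋₊, η (k : ZMod q) - kap η * ((u : ℂ) - N)) u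

variable {q : ℕ} [NeZero q] (η : DirichletCharacter ℂ q)

lemma Bf_bound : ∃ C : ℝ, 0 < C ∧ ∀ N u, ‖Bf η N u‖ ≤ C := by
  obtain ⟨C, hC, h⟩ := partial_sum_bound (fun a => η a)
  refine ⟨C + ‖kap η‖, by positivity, fun N u => ?_⟩
  unfold Bf
  by_cases hu : u ∈ Set.Ioi (N : ℝ)
  · rw [Set.indicator_of_mem hu]
    have hu' : (N : ℝ) < u := hu
    have hu0 : 0 ≤ u := (Nat.cast_nonneg N).trans hu'.le
    have h1 := h N ⌊u⌋₊ (Nat.le_floor hu'.le)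
    have e : ∑ k ∈ Finset.Ioc N ⌊u⌋₊, η (k : ZMod q) - kap η * ((u : ℂ) - N)
      = (∑ k ∈ Finset.Ioc N ⌊u⌋₊, η (k : ZMod q) - kap η * (((⌊u⌋₊ : ℕ) : ℂ) - N))
        - kap η * (((u - ⌊u⌋₊ : ℝ)) : ℂ) := by push_cast; ring
    rw [e]
    refine (norm_sub_le _ _).trans (add_le_add h1 ?_)
    rw [norm_mul, Complex.norm_real, Real.norm_eq_abs]
    have : |u - ⌊u⌋₊| ≤ 1 := by
      rw [abs_le]; constructor <;> linarith [Nat.floor_le hu0, Nat.lt_floor_add_one u]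
    nlinarith [norm_nonneg (kap η)]
  · rw [Set.indicator_of_notMem hu]; simp; positivity

lemma Bf_measurable (N : ℕ) : Measurable (Bf η N) := by
  unfold Bf
  apply Measurable.indicator _ measurableSet_Ioi
  apply Measurable.sub
  · exact (measurable_from_nat (f := fun m : ℕ => ∑ k ∈ Finset.Ioc N m, η (k : ZMod q))).comp Nat.measurable_floor
  · fun_prop

lemma locInt_of_bdd {f : ℝ → ℂ} (hf : Measurable f) {C : ℝ} (hC : ∀ u, ‖f u‖ ≤ C) :
    LocallyIntegrable f := by
  intro x
  refine ⟨Metric.closedBall x 1, Metric.closedBall_mem_nhds x one_pos, ?_⟩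
  exact Measure.integrableOn_of_bounded (M := C) (measure_closedBall_lt_top).ne
    hf.aestronglyMeasurable (Eventually.of_forall hC)

lemma Bf_mellin_diff {N : ℕ} (hN : 1 ≤ N) {s : ℂ} (hs : 0 < s.re) :
    DifferentiableAt ℂ (fun s => mellin (Bf η N) (-s)) s := by
  obtain ⟨C, hC, h⟩ := Bf_bound η
  have hN' : (1 : ℝ) ≤ N := by exact_mod_cast hN
  have := mellin_differentiableAt_of_isBigO_rpow (a := 0) (b := -s.re - 1) (f := Bf η N) (s := -s)
    ((locInt_of_bdd (Bf_measurable η N) (h N)).locallyIntegrableOn _) ?_ (by simpa using hs) ?_ (by simp)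
  · exact this.comp s differentiableAt_id.neg
  · simp only [neg_zero, Real.rpow_zero]
    exact Asymptotics.IsBigO.of_bound C (Eventually.of_forall fun u => by simpa using h N u)
  · refine Asymptotics.IsBigO.of_bound 1 ?_
    have : ∀ᶠ u in 𝓝[>] (0:ℝ), u < 1 := mem_nhdsWithin_of_mem_nhds (Iio_mem_nhds one_pos)
    filter_upwards [this] with u hu
    have : Bf η N u = 0 := by
      unfold Bf
      rw [Set.indicator_of_notMem]; simp; linarith
    rw [this]; simp

lemma LSeries_trunc {N : ℕ} (hN : 1 ≤ N) {s : ℂ} (hs : 1 < s.re) :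
    LSeries (fun n => η (n : ZMod q)) s = ∑ n ∈ Finset.Icc 1 N, η (n : ZMod q) * (n : ℂ) ^ (-s)
      + LSeries (fun n => if n ≤ N then 0 else η (n : ZMod q)) s := by
  have b : ∀ n : ℕ, ‖η (n : ZMod q)‖ ≤ 1 := fun n => η.norm_le_one _
  have h2 : LSeriesSummable (fun n => if n ≤ N then 0 else η (n : ZMod q)) s := by
    refine LSeriesSummable_of_bounded_of_one_lt_re (m := 1) (fun n hn => ?_) hs
    split_ifs
    · simp
    · exact b n
  have h1 : LSeriesSummable (fun n => if n ≤ N then η (n : ZMod q) else 0) s := by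
    refine LSeriesSummable_of_bounded_of_one_lt_re (m := 1) (fun n hn => ?_) hs
    split_ifs
    · exact b n
    · simp
  have e : (fun n : ℕ => η (n : ZMod q)) = (fun n : ℕ => if n ≤ N then η (n : ZMod q) else 0) +
    (fun n : ℕ => if n ≤ N then 0 else η (n : ZMod q)) := by
    ext n; simp only [Pi.add_apply]; split_ifs <;> simp
  conv_lhs => rw [e]
  rw [LSeries_add h1 h2]
  congr 1
  unfold LSeries
  rw [tsum_eq_sum (s := Finset.Icc 1 N)]
  · apply Finset.sum_congr rfl
    intro n hn
    simp only [Finset.mem_Icc] at hn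
    rw [LSeries.term_of_ne_zero (by omega), if_pos hn.2, Complex.cpow_neg]; rfl
  · intro n hn
    simp only [Finset.mem_Icc, not_and_or, not_le] at hn
    rcases hn with hn | hn
    · obtain rfl : n = 0 := by omega
      simp
    · rw [LSeries.term_of_ne_zero (by omega), if_neg (by omega)]; simp

lemma LSeries_tail {N : ℕ} (hN : 1 ≤ N) {s : ℂ} (hs : 1 < s.re) :
    LSeries (fun n => if n ≤ N then 0 else η (n : ZMod q)) s =
      kap η * (N : ℂ) ^ (1 - s) / (s - 1) + s * mellin (Bf η N) (-s) := by
  have hN' : (1 : ℝ) ≤ N := by exact_mod_cast hN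
  have hN0 : (0 : ℝ) < N := by linarith
  have b : ∀ n : ℕ, ‖η (n : ZMod q)‖ ≤ 1 := fun n => η.norm_le_one _
  rw [LSeries_eq_mul_integral' _ (r := 1) zero_le_one hs]
  swap
  · refine Asymptotics.IsBigO.of_bound 1 (Eventually.of_forall fun n => ?_)
    rw [Real.norm_of_nonneg (Finset.sum_nonneg fun _ _ => norm_nonneg _)]
    calc _ ≤ ∑ k ∈ Finset.Icc 1 n, (1:ℝ) := by
          apply Finset.sum_le_sum; intro k _; split_ifs
          · simp
          · exact b k
      _ ≤ _ := by simp
  set P : ℝ → ℂ := fun t => (∑ k ∈ Finset.Icc 1 ⌊t⌋₊, if k ≤ N then 0 else η (k : ZMod q)) with hP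
  have eP : ∀ t : ℝ, P t = Bf η N t + (Set.Ioi (N:ℝ)).indicator (fun t : ℝ => kap η * ((t : ℂ) - N)) t := by
    intro t
    have : P t = ∑ k ∈ Finset.Ioc N ⌊t⌋₊, η (k : ZMod q) := by
      simp only [hP]
      rw [← Finset.sum_filter_add_sum_filter_not _ (fun k => k ≤ N)]
      rw [Finset.sum_eq_zero, zero_add]
      · apply Finset.sum_congr
        · ext k; simp; omega
        · intro k hk; simp at hk; rw [if_neg (by omega)]
      · intro k hk; simp at hk; rw [if_pos hk.2]
    rw [this]
    unfold Bf
    by_cases h : t ∈ Set.Ioi (N : ℝ)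
    · rw [Set.indicator_of_mem h, Set.indicator_of_mem h]; ring
    · rw [Set.indicator_of_notMem h, Set.indicator_of_notMem h, Finset.Ioc_eq_empty]
      · simp
      · simp only [Set.mem_Ioi, not_lt] at h ⊢
        exact Nat.floor_le_of_le h
  have i1 : IntegrableOn (fun t : ℝ => Bf η N t * (t : ℂ) ^ (-(s + 1))) (Set.Ioi 1) := by
    obtain ⟨C, hC, h⟩ := Bf_bound η
    have : IntegrableOn (fun t : ℝ => (t : ℂ) ^ (-(s + 1))) (Set.Ioi 1) :=
      integrableOn_Ioi_cpow_of_lt (by simp; linarith) one_pos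
    exact Integrable.bdd_mul (c := C) this (Bf_measurable η N).aestronglyMeasurable (Eventually.of_forall (h N))
  have i2a : IntegrableOn (fun t : ℝ => (t : ℂ) ^ (-s)) (Set.Ioi (N:ℝ)) :=
      integrableOn_Ioi_cpow_of_lt (by simp; linarith) hN0
  have i2b : IntegrableOn (fun t : ℝ => (t : ℂ) ^ (-(s+1))) (Set.Ioi (N:ℝ)) :=
      integrableOn_Ioi_cpow_of_lt (by simp; linarith) hN0
  have e2 : ∀ t ∈ Set.Ioi (N:ℝ), kap η * ((t : ℂ) - N) * (t : ℂ) ^ (-(s + 1)) =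
      kap η * (t : ℂ) ^ (-s) - kap η * N * (t : ℂ) ^ (-(s+1)) := by
    intro t ht
    have ht0 : (t : ℂ) ≠ 0 := by
      have : (0 : ℝ) < t := hN0.trans ht
      exact_mod_cast this.ne'
    have : (t : ℂ) ^ (-s) = t * (t : ℂ) ^ (-(s+1)) := by
      rw [show -s = 1 + -(s+1) by ring, Complex.cpow_add _ _ ht0, Complex.cpow_one]
    rw [this]; ring
  have i2 : IntegrableOn (fun t : ℝ => kap η * ((t : ℂ) - N) * (t : ℂ) ^ (-(s + 1))) (Set.Ioi (N:ℝ)) := by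
    have : IntegrableOn (fun t : ℝ => kap η * (t : ℂ) ^ (-s) - kap η * N * (t : ℂ) ^ (-(s+1))) (Set.Ioi (N:ℝ)) :=
      (i2a.const_mul _).sub (i2b.const_mul _)
    exact this.congr_fun (fun t ht => (e2 t ht).symm) measurableSet_Ioi
  have sub : Set.Ioi (N:ℝ) ⊆ Set.Ioi 1 := Set.Ioi_subset_Ioi hN'
  have e3 : (∫ t in Set.Ioi (1:ℝ), P t * (t:ℂ) ^ (-(s+1))) = (∫ t in Set.Ioi (1:ℝ), Bf η N t * (t : ℂ) ^ (-(s + 1)))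
      + ∫ t in Set.Ioi (N:ℝ), kap η * ((t : ℂ) - N) * (t : ℂ) ^ (-(s + 1)) := by
    have : ∀ t : ℝ, P t * (t:ℂ) ^ (-(s+1)) = Bf η N t * (t : ℂ) ^ (-(s + 1)) +
      (Set.Ioi (N:ℝ)).indicator (fun t : ℝ => kap η * ((t : ℂ) - N) * (t : ℂ) ^ (-(s + 1))) t := by
      intro t; rw [eP]
      by_cases h : t ∈ Set.Ioi (N : ℝ)
      · rw [Set.indicator_of_mem h, Set.indicator_of_mem h]; ring
      · rw [Set.indicator_of_notMem h, Set.indicator_of_notMem h]; ring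
    simp_rw [this]
    rw [integral_add i1]
    · congr 1
      rw [setIntegral_indicator measurableSet_Ioi, Set.inter_eq_right.mpr sub]
    · exact ((integrable_indicator_iff measurableSet_Ioi).mpr i2).integrableOn
  have e4 : ∫ t in Set.Ioi (N:ℝ), kap η * ((t : ℂ) - N) * (t : ℂ) ^ (-(s + 1)) =
      kap η * (N:ℂ) ^ (1 - s) / (s * (s - 1)) := by
    rw [setIntegral_congr_fun measurableSet_Ioi e2, integral_sub (i2a.const_mul _) (i2b.const_mul _),
      integral_const_mul, integral_const_mul, integral_Ioi_cpow_of_lt (by simp; linarith) hN0,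
      integral_Ioi_cpow_of_lt (by simp; linarith) hN0]
    have hNc : (N : ℂ) ≠ 0 := by exact_mod_cast hN0.ne'
    have a1 : s ≠ 0 := by intro h; rw [h] at hs; simp at hs; linarith
    have a2 : s - 1 ≠ 0 := by
      intro h; rw [sub_eq_zero] at h; rw [h] at hs; simp at hs
    have a3 : ((N : ℝ) : ℂ) = N := by simp
    rw [a3, show -s + 1 = 1 - s by ring, show -(s+1) + 1 = -s by ring]
    have : (N : ℂ) ^ (1 - s) = N * (N : ℂ) ^ (-s) := by
      rw [show 1 - s = 1 + -s by ring, Complex.cpow_add _ _ hNc, Complex.cpow_one]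
    rw [this]
    have a4 : 1 - s ≠ 0 := by rw [← neg_sub]; exact neg_ne_zero.mpr a2
    field_simp
    ring
  have e5 : (∫ t in Set.Ioi (1:ℝ), Bf η N t * (t : ℂ) ^ (-(s + 1))) = mellin (Bf η N) (-s) := by
    unfold mellin
    have z : ∀ t ∈ Set.Ioi (0:ℝ) \ Set.Ioi 1, (t:ℂ) ^ (-s - 1) • Bf η N t = 0 := by
      intro t ht
      simp at ht
      unfold Bf
      rw [Set.indicator_of_notMem, smul_zero]; simp; linarith
    rw [setIntegral_eq_of_subset_of_forall_sdiff_eq_zero measurableSet_Ioi (Set.Ioi_subset_Ioi zero_le_one) z]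
    congr 1; ext t; rw [smul_eq_mul, mul_comm, show -(s+1) = -s - 1 by ring]
  rw [e3, e4, e5]
  have a1 : s ≠ 0 := by intro h; rw [h] at hs; simp at hs; linarith
  rw [mul_add, add_comm]
  congr 1
  field_simp

end

section

open MeasureTheory Complex Filter Topology
variable {q : ℕ} [NeZero q] (η : DirichletCharacter ℂ q)

lemma LFunction_formula {N : ℕ} (hN : 1 ≤ N) {s : ℂ} (hs : 0 < s.re) (hi : s.im ≠ 0) :
    η.LFunction s = ∑ n ∈ Finset.Icc 1 N, η (n : ZMod q) * (n : ℂ) ^ (-s)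
      + (kap η * (N : ℂ) ^ (1 - s) / (s - 1) + s * mellin (Bf η N) (-s)) := by
  have hNc : (N : ℂ) ≠ 0 := by exact_mod_cast (by omega : N ≠ 0)
  set g : ℂ → ℂ := fun s => ∑ n ∈ Finset.Icc 1 N, η (n : ZMod q) * (n : ℂ) ^ (-s)
      + (kap η * (N : ℂ) ^ (1 - s) / (s - 1) + s * mellin (Bf η N) (-s)) with hg
  set U : Set ℂ := {z | 0 < z.re ∧ 0 < s.im * z.im} with hU
  have hUo : IsOpen U := by
    apply IsOpen.inter
    · exact isOpen_lt continuous_const continuous_re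
    · exact isOpen_lt continuous_const (continuous_const.mul continuous_im)
  have hUc : Convex ℝ U := by
    intro x hx y hy a b ha hb hab
    simp only [hU, Set.mem_ofPred_eq] at hx hy ⊢
    simp only [add_re, real_smul, mul_re, ofReal_re, ofReal_im, zero_mul, sub_zero, add_im, mul_im, add_zero]
    rcases eq_or_lt_of_le ha with h | h
    · subst h
      have : b = 1 := by linarith
      subst this; simp; exact hy
    · constructor
      · nlinarith [mul_pos h hx.1, mul_nonneg hb hy.1.le]
      · have := mul_pos h hx.2
        have := mul_nonneg hb hy.2.le
        nlinarith
  have hne : ∀ z ∈ U, z ≠ 1 := by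
    rintro z hz rfl
    simp [hU] at hz
  have d1 : DifferentiableOn ℂ (η.LFunction) U := fun z hz =>
    (η.differentiableAt_LFunction z (Or.inl (hne z hz))).differentiableWithinAt
  have d2 : DifferentiableOn ℂ g U := by
    intro z hz
    apply DifferentiableAt.differentiableWithinAt
    have h1 := Bf_mellin_diff η hN hz.1
    have h2 : z - 1 ≠ 0 := sub_ne_zero.mpr (hne z hz)
    simp only [hg]
    apply DifferentiableAt.add
    · apply DifferentiableAt.fun_sum
      intro n hn
      have : (n : ℂ) ≠ 0 := by
        have := (Finset.mem_Icc.mp hn).1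
        exact_mod_cast (by omega : n ≠ 0)
      exact (DifferentiableAt.const_cpow (by fun_prop) (Or.inl this)).const_mul _
    · apply DifferentiableAt.add
      · refine DifferentiableAt.fun_div ?_ (by fun_prop) h2
        exact (DifferentiableAt.const_cpow (by fun_prop) (Or.inl hNc)).const_mul _
      · exact differentiableAt_id.mul h1
  have hz0 : (2 + s.im * I : ℂ) ∈ U := by
    simp only [hU, Set.mem_ofPred_eq]
    simp
    positivity
  have key := AnalyticOnNhd.eqOn_of_preconnected_of_eventuallyEq (d1.analyticOnNhd hUo)
    (d2.analyticOnNhd hUo) hUc.isPreconnected hz0 ?_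
  · exact key (show s ∈ U from ⟨hs, mul_self_pos.mpr hi⟩)
  · have : {z : ℂ | 1 < z.re} ∈ 𝓝 (2 + s.im * I : ℂ) :=
      (isOpen_lt continuous_const continuous_re).mem_nhds (by simp)
    filter_upwards [this] with z hz
    rw [η.LFunction_eq_LSeries hz, LSeries_trunc η hN hz, LSeries_tail η hN hz]

lemma mellin_Bf_bound : ∃ C : ℝ, 0 < C ∧ ∀ N : ℕ, 1 ≤ N → ∀ s : ℂ, 0 < s.re →
    ‖mellin (Bf η N) (-s)‖ ≤ C * (N : ℝ) ^ (-s.re) / s.re := by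
  obtain ⟨C, hC, h⟩ := Bf_bound η
  refine ⟨C, hC, fun N hN s hs => ?_⟩
  have hN0 : (0 : ℝ) < N := by exact_mod_cast hN
  unfold mellin
  have z : ∀ t ∈ Set.Ioi (0:ℝ) \ Set.Ioi N, (t:ℂ) ^ (-s - 1) • Bf η N t = 0 := by
    intro t ht
    simp at ht
    unfold Bf
    rw [Set.indicator_of_notMem, smul_zero]; simp; linarith
  rw [setIntegral_eq_of_subset_of_forall_sdiff_eq_zero measurableSet_Ioi (Set.Ioi_subset_Ioi hN0.le) z]
  have : ∀ᵐ t : ℝ ∂(volume.restrict (Set.Ioi (N:ℝ))), ‖(t:ℂ) ^ (-s - 1) • Bf η N t‖ ≤ C * t ^ (-s.re - 1) := by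
    rw [ae_restrict_iff' measurableSet_Ioi]
    refine Eventually.of_forall fun t ht => ?_
    have ht0 : 0 < t := hN0.trans ht
    rw [norm_smul, Complex.norm_cpow_eq_rpow_re_of_pos ht0, mul_comm]
    simp only [sub_re, neg_re, one_re]
    gcongr
    exact h N t
  refine (norm_integral_le_of_norm_le ((integrableOn_Ioi_rpow_of_lt (by linarith) hN0).const_mul C) this).trans ?_
  rw [integral_const_mul, integral_Ioi_rpow_of_lt (by linarith) hN0]
  apply le_of_eq
  rw [show -s.re - 1 + 1 = -s.re by ring]
  rw [neg_div_neg_eq]; ring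

lemma LFunction_upper : ∃ C : ℝ, 0 < C ∧ ∀ s : ℂ, 8 ≤ |s.im| → 1 - 1 / Real.log |s.im| ≤ s.re → s.re ≤ 3 →
    ‖η.LFunction s‖ ≤ C * Real.log |s.im| := by
  obtain ⟨C, hC, hB⟩ := mellin_Bf_bound η
  refine ⟨Real.exp 1 * 2 + (‖kap η‖ * Real.exp 1 + 8 * C * Real.exp 1), by positivity, fun s ht h1 h3 => ?_⟩
  set t := |s.im| with htdef
  set N := ⌊t⌋₊ with hNdef
  have hN8 : 8 ≤ N := Nat.le_floor (by exact_mod_cast ht)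
  have hN0 : (8 : ℝ) ≤ N := by exact_mod_cast hN8
  have hNt : (N : ℝ) ≤ t := Nat.floor_le (by linarith)
  have htN : t < N + 1 := Nat.lt_floor_add_one t
  have hlog : 2 ≤ Real.log t := by
    rw [Real.le_log_iff_exp_le (by linarith)]
    have := Real.exp_one_lt_d9
    have h2 : Real.exp 2 = Real.exp 1 * Real.exp 1 := by rw [← Real.exp_add]; norm_num
    rw [h2]; nlinarith [Real.exp_pos 1]
  have hre : 1 / 2 ≤ s.re := by
    have : 1 / Real.log t ≤ 1 / 2 := one_div_le_one_div_of_le (by norm_num) hlog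
    linarith
  have him : s.im ≠ 0 := by
    intro h; rw [htdef, h] at ht; simp at ht; linarith
  -- basic: n^{1-re} ≤ e
  have pw : ∀ x : ℝ, 1 ≤ x → x ≤ t → x ^ (1 - s.re) ≤ Real.exp 1 := by
    intro x hx hxt
    rw [Real.rpow_def_of_pos (by linarith)]
    apply Real.exp_le_exp.mpr
    have l0 : 0 ≤ Real.log x := Real.log_nonneg hx
    have l1 : Real.log x ≤ Real.log t := Real.log_le_log (by linarith) hxt
    have l2 : 1 - s.re ≤ 1 / Real.log t := by linarith
    calc Real.log x * (1 - s.re) ≤ Real.log x * (1 / Real.log t) := by gcongr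
      _ ≤ Real.log t * (1 / Real.log t) := by gcongr
      _ = 1 := by field_simp
  rw [LFunction_formula η (by omega : 1 ≤ N) (by linarith) him]
  have b1 : ‖∑ n ∈ Finset.Icc 1 N, η (n : ZMod q) * (n : ℂ) ^ (-s)‖ ≤ Real.exp 1 * 2 * Real.log t := by
    calc _ ≤ ∑ n ∈ Finset.Icc 1 N, Real.exp 1 * ((n : ℝ))⁻¹ := by
          refine norm_sum_le_of_le _ fun n hn => ?_
          have hn' := Finset.mem_Icc.mp hn
          have n0 : (1 : ℝ) ≤ n := by exact_mod_cast hn'.1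
          have n1 : (n : ℝ) ≤ t := le_trans (by exact_mod_cast hn'.2) hNt
          rw [norm_mul]
          have e : ‖(n : ℂ) ^ (-s)‖ = (n : ℝ) ^ (1 - s.re) * (n:ℝ)⁻¹ := by
            rw [Complex.norm_natCast_cpow_of_pos (by omega), neg_re,
              show -s.re = (1 - s.re) + (-1) by ring, Real.rpow_add (by linarith), Real.rpow_neg_one]
          rw [e]
          calc _ ≤ 1 * ((n : ℝ) ^ (1 - s.re) * (n:ℝ)⁻¹) := by
                gcongr
                exact η.norm_le_one _
            _ ≤ _ := by rw [one_mul]; gcongr; exact pw n n0 n1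
      _ = Real.exp 1 * (harmonic N : ℝ) := by
          rw [← Finset.mul_sum, harmonic_eq_sum_Icc]; push_cast; rfl
      _ ≤ Real.exp 1 * (1 + Real.log N) := by gcongr; exact harmonic_le_one_add_log N
      _ ≤ Real.exp 1 * (2 * Real.log t) := by
          have := Real.log_le_log (by linarith) hNt
          gcongr; linarith
      _ = _ := by ring
  have b2 : ‖kap η * (N : ℂ) ^ (1 - s) / (s - 1)‖ ≤ ‖kap η‖ * Real.exp 1 * Real.log t := by
    rw [norm_div, norm_mul, Complex.norm_natCast_cpow_of_pos (by omega)]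
    have : 1 ≤ ‖s - 1‖ := by
      calc (1:ℝ) ≤ t := by linarith
        _ = |(s - 1).im| := by simp [htdef]
        _ ≤ _ := Complex.abs_im_le_norm _
    have p := pw N (by linarith) hNt
    have e : (1 - s).re = 1 - s.re := by simp
    rw [e]
    calc _ ≤ ‖kap η‖ * (N:ℝ) ^ (1 - s.re) := div_le_self (by positivity) this
      _ ≤ ‖kap η‖ * Real.exp 1 := by gcongr
      _ ≤ _ := le_mul_of_one_le_right (by positivity) (by linarith)
  have b3 : ‖s * mellin (Bf η N) (-s)‖ ≤ 8 * C * Real.exp 1 * Real.log t := by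
    rw [norm_mul]
    have n1 : ‖s‖ ≤ 2 * N := by
      calc ‖s‖ ≤ |s.re| + |s.im| := Complex.norm_le_abs_re_add_abs_im s
        _ ≤ 3 + t := by rw [abs_of_nonneg (by linarith)]; linarith
        _ ≤ _ := by linarith
    have n2 := hB N (by omega) s (by linarith)
    have p := pw N (by linarith) hNt
    have e : (N:ℝ) ^ (-s.re) = (N:ℝ) ^ (1 - s.re) / N := by
      rw [show -s.re = (1 - s.re) - 1 by ring, Real.rpow_sub (by linarith), Real.rpow_one]
    calc _ ≤ (2 * N) * (C * (N : ℝ) ^ (-s.re) / s.re) := by gcongr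
      _ = 2 * C * (N:ℝ) ^ (1 - s.re) / s.re := by rw [e]; field_simp
      _ ≤ 2 * C * Real.exp 1 / (1/2) := by gcongr
      _ = 4 * C * Real.exp 1 := by ring
      _ ≤ 4 * C * Real.exp 1 * Real.log t := le_mul_of_one_le_right (by positivity) (by linarith)
      _ ≤ _ := by gcongr; norm_num
  calc _ ≤ _ := (norm_add_le _ _).trans (add_le_add b1 ((norm_add_le _ _).trans (add_le_add b2 b3)))
    _ = _ := by ring

end

section

open MeasureTheory Complex Filter Topology
variable {q : ℕ} [NeZero q] (η : DirichletCharacter ℂ q)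

lemma two_le_log {t : ℝ} (ht : 8 ≤ t) : 2 ≤ Real.log t := by
  rw [Real.le_log_iff_exp_le (by linarith)]
  have := Real.exp_one_lt_d9
  have h2 : Real.exp 2 = Real.exp 1 * Real.exp 1 := by rw [← Real.exp_add]; norm_num
  rw [h2]; nlinarith [Real.exp_pos 1]

lemma LFunction_derivs : ∃ C : ℝ, 1 ≤ C ∧ ∀ s : ℂ, 10 ≤ |s.im| → 1 ≤ s.re → s.re ≤ 2 →
    ‖η.LFunction s‖ ≤ C * Real.log |s.im| ∧ ‖deriv η.LFunction s‖ ≤ C * Real.log |s.im| ^ 2 ∧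
    ‖deriv (deriv η.LFunction) s‖ ≤ C * Real.log |s.im| ^ 3 := by
  obtain ⟨C, hC, h⟩ := LFunction_upper η
  refine ⟨16 * C + 1, by linarith, fun s ht h1 h2 => ?_⟩
  set t := |s.im| with htd
  have hl : 2 ≤ Real.log t := two_le_log (by linarith)
  set ℓ := Real.log t with hld
  set r : ℝ := 1 / (2 * ℓ) with hr
  have hr0 : 0 < r := by positivity
  have hr1 : r ≤ 1 / 4 := by
    rw [hr]; apply one_div_le_one_div_of_le (by norm_num); linarith
  have hb : ∀ z ∈ Metric.closedBall s r, 8 ≤ |z.im| ∧ ‖η.LFunction z‖ ≤ 2 * C * ℓ := by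
    intro z hz
    rw [Metric.mem_closedBall, dist_eq] at hz
    have a1 : |z.im - s.im| ≤ r := by
      have := Complex.abs_im_le_norm (z - s); simp at this; linarith
    have a2 : |z.re - s.re| ≤ r := by
      have := Complex.abs_re_le_norm (z - s); simp at this; linarith
    have a3 : |z.im| ≤ t + 1/4 := by
      have := abs_sub_abs_le_abs_sub z.im s.im; linarith
    have a4 : t - 1/4 ≤ |z.im| := by
      have := abs_sub_abs_le_abs_sub s.im z.im; rw [abs_sub_comm] at this; linarith
    have a5 : Real.log |z.im| ≤ 2 * ℓ := by
      calc Real.log |z.im| ≤ Real.log (t ^ 2) := Real.log_le_log (by linarith) (by nlinarith)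
        _ = 2 * ℓ := by rw [Real.log_pow]; simp [hld]
    have a6 : 2 ≤ Real.log |z.im| := two_le_log (by linarith)
    have a7 := abs_le.mp a2
    refine ⟨by linarith, (h z (by linarith) ?_ (by linarith)).trans ?_⟩
    · have : r ≤ 1 / Real.log |z.im| := by
        rw [hr]; exact one_div_le_one_div_of_le (by linarith) a5
      linarith
    · nlinarith
  have hd : DiffContOnCl ℂ η.LFunction (Metric.ball s r) := by
    apply DifferentiableOn.diffContOnCl
    rw [closure_ball _ hr0.ne']
    intro z hz
    refine (η.differentiableAt_LFunction z (Or.inl ?_)).differentiableWithinAt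
    rintro rfl
    have := (hb 1 hz).1
    simp at this; linarith
  have hs : ∀ z ∈ Metric.sphere s r, ‖η.LFunction z‖ ≤ 2 * C * ℓ := fun z hz =>
    (hb z (Metric.sphere_subset_closedBall hz)).2
  have e0 := (hb s (Metric.mem_closedBall_self hr0.le)).2
  have e1 := norm_deriv_le_of_forall_mem_sphere_norm_le hr0 hd hs
  have e2 := norm_iteratedDeriv_le_of_forall_mem_sphere_norm_le 2 hr0 hd hs
  rw [iteratedDeriv_succ, iteratedDeriv_one] at e2
  have hl0 : 0 < ℓ := by linarith
  refine ⟨?_, ?_, ?_⟩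
  · nlinarith
  · refine e1.trans ?_
    have : 2 * C * ℓ / r = 4 * C * ℓ ^ 2 := by rw [hr]; field_simp; ring
    rw [this]; nlinarith [sq_nonneg ℓ, pow_pos hl0 2]
  · refine e2.trans ?_
    have : (Nat.factorial 2 : ℝ) * (2 * C * ℓ) / r ^ 2 = 16 * C * ℓ ^ 3 := by
      rw [hr, Nat.factorial_two]; field_simp; push_cast; ring
    rw [this]; nlinarith [pow_pos hl0 3]

lemma LTriv_upper (q : ℕ) [NeZero q] : ∃ C : ℝ, 1 ≤ C ∧ ∀ x : ℝ, 0 < x → x ≤ 1 →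
    ‖DirichletCharacter.LFunctionTrivChar q (1 + x)‖ ≤ C / x := by
  have hc : ContinuousOn (fun x : ℝ => DirichletCharacter.LFunctionTrivChar₁ q (1 + x)) (Set.Icc 0 1) := by
    have := (DirichletCharacter.differentiable_LFunctionTrivChar₁ q).continuous
    exact (this.comp (by fun_prop : Continuous fun x : ℝ => (1 + x : ℂ))).continuousOn
  obtain ⟨C, hC⟩ := isCompact_Icc.exists_bound_of_continuousOn hc
  refine ⟨max C 1, le_max_right _ _, fun x hx hx1 => ?_⟩
  have h := hC x ⟨hx.le, hx1⟩
  have hne : (1 + x : ℂ) ≠ 1 := by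
    intro h; simp at h; exact hx.ne' (by exact_mod_cast h)
  have e : DirichletCharacter.LFunctionTrivChar₁ q (1 + x) = x * DirichletCharacter.LFunctionTrivChar q (1 + x) := by
    unfold DirichletCharacter.LFunctionTrivChar₁
    rw [Function.update_of_ne hne]; simp
  rw [e, norm_mul, Complex.norm_real, Real.norm_of_nonneg hx.le] at h
  rw [le_div_iff₀ hx, mul_comm]
  exact h.trans (le_max_left _ _)

lemma LFunction_lower : ∃ c : ℝ, 0 < c ∧ ∀ s : ℂ, 10 ≤ |s.im| → 1 < s.re → s.re ≤ 2 →
    c ≤ ‖η.LFunction s‖ * Real.log |s.im| ^ 7 := by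
  obtain ⟨C1, hC1, h1⟩ := LTriv_upper q
  obtain ⟨C2, hC2, h2⟩ := LFunction_derivs (η ^ 2)
  obtain ⟨C, hC, h⟩ := LFunction_derivs η
  -- c1 ^ 4 * (C1^3 * 2 * C2) ≤ 1
  set D := C1 ^ 3 * (2 * C2) with hD
  have hD1 : 1 ≤ D := by
    have : 1 ≤ C1 ^ 3 := one_le_pow₀ hC1
    nlinarith
  set c1 : ℝ := 1 / D with hc1
  have hc10 : 0 < c1 := by positivity
  have hc11 : c1 ≤ 1 := by rw [hc1]; exact div_le_one_of_le₀ hD1 (by linarith)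
  have hcD : c1 ^ 4 * D ≤ 1 := by
    have : c1 * D = 1 := by rw [hc1]; field_simp
    calc c1 ^ 4 * D = c1 ^ 3 * (c1 * D) := by ring
      _ = c1 ^ 3 := by rw [this, mul_one]
      _ ≤ 1 := pow_le_one₀ hc10.le hc11
  set b : ℝ := c1 / (2 * C) with hb
  have hb0 : 0 < b := by positivity
  have hb1 : b ≤ 1 := by
    rw [hb]; apply div_le_one_of_le₀ <;> linarith
  -- main inequality
  have main : ∀ (t x : ℝ), 10 ≤ |t| → 0 < x → x ≤ 1 →
      x ^ 3 ≤ D * Real.log |t| * ‖η.LFunction (1 + x + I * t)‖ ^ 4 := by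
    intro t x ht hx hx1
    have p := DirichletCharacter.norm_LFunction_product_ge_one η hx t
    rw [norm_mul, norm_mul, norm_pow, norm_pow] at p
    have l0 : 2 ≤ Real.log |t| := two_le_log (by linarith)
    have u1 := h1 x hx hx1
    have u2 := (h2 (1 + x + 2 * I * t) (by simp [abs_mul]; linarith) (by simp; linarith) (by simp; linarith)).1
    have e : (1 + x + 2 * I * t : ℂ).im = 2 * t := by simp
    rw [e] at u2
    have u3 : Real.log |2 * t| ≤ 2 * Real.log |t| := by
      calc Real.log |2 * t| ≤ Real.log (|t| ^ 2) := by
            apply Real.log_le_log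
            · rw [abs_mul]; simp; intro h; rw [h] at ht; simp at ht; linarith
            · rw [abs_mul]; simp only [Nat.abs_ofNat]; nlinarith
        _ = _ := by rw [Real.log_pow]; simp
    have u4 : ‖(η ^ 2).LFunction (1 + x + 2 * I * t)‖ ≤ 2 * C2 * Real.log |t| := by nlinarith
    have : 1 ≤ (C1 / x) ^ 3 * ‖η.LFunction (1 + x + I * t)‖ ^ 4 * (2 * C2 * Real.log |t|) := by
      refine le_trans p ?_
      gcongr
    have h3 : (C1 / x) ^ 3 * ‖η.LFunction (1 + x + I * t)‖ ^ 4 * (2 * C2 * Real.log |t|) =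
      (D * Real.log |t| * ‖η.LFunction (1 + x + I * t)‖ ^ 4) / x ^ 3 := by rw [hD]; field_simp
    rw [h3, le_div_iff₀ (by positivity)] at this
    linarith
  -- consequence
  have cons : ∀ (t x : ℝ), 10 ≤ |t| → 0 < x → x ≤ 1 → b ^ 4 ≤ x * Real.log |t| ^ 9 →
      c1 * b ^ 3 ≤ ‖η.LFunction (1 + x + I * t)‖ * Real.log |t| ^ 7 := by
    intro t x ht hx hx1 hbx
    have l0 : 2 ≤ Real.log |t| := two_le_log (by linarith)
    have m := main t x ht hx hx1
    set y := ‖η.LFunction (1 + x + I * t)‖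
    set ℓ := Real.log |t|
    have hy : 0 ≤ y := norm_nonneg _
    have : (c1 * b ^ 3) ^ 4 ≤ (y * ℓ ^ 7) ^ 4 := by
      calc (c1 * b ^ 3) ^ 4 = c1 ^ 4 * (b ^ 4) ^ 3 := by ring
        _ ≤ c1 ^ 4 * (x * ℓ ^ 9) ^ 3 := by gcongr
        _ = c1 ^ 4 * ℓ ^ 27 * x ^ 3 := by ring
        _ ≤ c1 ^ 4 * ℓ ^ 27 * (D * ℓ * y ^ 4) := by gcongr
        _ = (c1 ^ 4 * D) * (y * ℓ ^ 7) ^ 4 := by ring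
        _ ≤ 1 * (y * ℓ ^ 7) ^ 4 := by gcongr
        _ = _ := one_mul _
    exact le_of_pow_le_pow_left₀ (by norm_num) (by positivity) this
  refine ⟨c1 * b ^ 3 / 2, by positivity, fun s ht hs1 hs2 => ?_⟩
  set t := s.im with htd
  set x := s.re - 1 with hxd
  have es : s = 1 + x + I * t := by
    apply Complex.ext <;> simp [hxd, htd]
  have hx0 : 0 < x := by linarith
  have l0 : 2 ≤ Real.log |t| := two_le_log (by linarith)
  rcases le_total (b ^ 4) (x * Real.log |t| ^ 9) with hbx | hbx
  · have := cons t x ht hx0 (by linarith) hbx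
    rw [es]
    have : 0 < c1 * b ^ 3 := by positivity
    linarith
  · set ℓ := Real.log |t|
    set x0 := b ^ 4 / ℓ ^ 9 with hx0d
    have hl9 : 0 < ℓ ^ 9 := by positivity
    have hx00 : 0 < x0 := by positivity
    have hxx : x ≤ x0 := by rw [hx0d, le_div_iff₀ hl9]; exact hbx
    have hx01 : x0 ≤ 1 := by
      apply div_le_one_of_le₀ _ hl9.le
      calc b ^ 4 ≤ 1 := pow_le_one₀ hb0.le hb1
        _ ≤ ℓ ^ 9 := one_le_pow₀ (by linarith)
    have k := cons t x0 ht hx00 hx01 (by rw [hx0d]; field_simp; exact le_refl _)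
    -- mean value
    have mv : ‖η.LFunction (1 + x0 + I * t) - η.LFunction s‖ ≤ C * ℓ ^ 2 * ‖(1 + x0 + I * t) - s‖ := by
      have hcx : Convex ℝ {z : ℂ | z.im = t ∧ 1 ≤ z.re ∧ z.re ≤ 2} := by
        intro z hz w hw a b' ha hb hab
        simp only [Set.mem_ofPred_eq] at hz hw ⊢
        simp only [add_re, real_smul, mul_re, ofReal_re, ofReal_im, zero_mul, sub_zero, add_im, mul_im, add_zero]
        obtain rfl : b' = 1 - a := by linarith
        refine ⟨by rw [hz.1, hw.1]; ring, by nlinarith, by nlinarith⟩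
      apply hcx.norm_image_sub_le_of_norm_deriv_le (𝕜 := ℂ) (f := η.LFunction)
      · intro z hz
        refine η.differentiableAt_LFunction z (Or.inl ?_)
        rintro rfl
        have := hz.1; simp at this; rw [← this] at ht; simp at ht; linarith
      · intro z hz
        have := (h z (by rw [hz.1]; exact ht) hz.2.1 hz.2.2).2.1
        rw [hz.1] at this
        exact this
      · exact ⟨rfl, hs1.le, hs2⟩
      · simp; constructor <;> linarith
    have nn : ‖((1 + x0 + I * t : ℂ)) - s‖ ≤ x0 := by
      have : ((1 + x0 + I * t : ℂ)) - s = ((x0 - x : ℝ) : ℂ) := by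
        rw [es]; push_cast; ring
      rw [this, Complex.norm_real, Real.norm_of_nonneg (by linarith)]; linarith
    have tri : ‖η.LFunction (1 + x0 + I * t)‖ ≤ ‖η.LFunction s‖ + C * ℓ ^ 2 * x0 := by
      calc _ = ‖η.LFunction s + (η.LFunction (1 + x0 + I * t) - η.LFunction s)‖ := by congr 1; ring
        _ ≤ _ := norm_add_le _ _
        _ ≤ _ := by gcongr; exact mv.trans (by gcongr)
    have fin : C * ℓ ^ 2 * x0 * ℓ ^ 7 = C * b ^ 4 := by rw [hx0d]; field_simp
    have fin2 : C * b ^ 4 = c1 * b ^ 3 / 2 := by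
      have : C * b = c1 / 2 := by rw [hb]; field_simp
      calc C * b ^ 4 = (C * b) * b ^ 3 := by ring
        _ = _ := by rw [this]; ring
    have : ‖η.LFunction (1 + x0 + I * t)‖ * ℓ ^ 7 ≤ ‖η.LFunction s‖ * ℓ ^ 7 + C * b ^ 4 := by
      rw [← fin, ← add_mul]; gcongr
    linarith

end

section

open MeasureTheory Complex Filter Topology
variable {q : ℕ} [NeZero q] (η : DirichletCharacter ℂ q)

open Classical in
noncomputable def dl : ℂ := if η = 1 then 1 else 0

open Classical in
noncomputable def Gf : ℂ → ℂ := if η = 1 then DirichletCharacter.LFunctionTrivChar₁ q else η.LFunction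

noncomputable def Kf (s : ℂ) : ℂ := -(deriv (Gf η) s / Gf η s + dl η) / s

lemma norm_dl_le : ‖dl η‖ ≤ 1 := by
  unfold dl; split_ifs <;> simp

lemma Gf_diff : Differentiable ℂ (Gf η) := by
  unfold Gf
  split_ifs with h
  · exact DirichletCharacter.differentiable_LFunctionTrivChar₁ q
  · exact DirichletCharacter.differentiable_LFunction h

lemma Gf_ne_zero {s : ℂ} (hs : 1 ≤ s.re) : Gf η s ≠ 0 := by
  unfold Gf
  split_ifs with h
  · rcases eq_or_ne s 1 with rfl | h1
    · exact DirichletCharacter.LFunctionTrivChar₁_apply_one_ne_zero q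
    · rw [DirichletCharacter.LFunctionTrivChar₁, Function.update_of_ne h1]
      exact mul_ne_zero (sub_ne_zero.2 h1)
        (DirichletCharacter.LFunction_ne_zero_of_one_le_re _ (Or.inr h1) hs)
  · exact DirichletCharacter.LFunction_ne_zero_of_one_le_re _ (Or.inl h) hs

lemma Kf_eq {s : ℂ} (hs : 1 < s.re) :
    Kf η s = -(deriv η.LFunction s / η.LFunction s) / s - dl η / (s - 1) := by
  have h1 : s ≠ 1 := by rintro rfl; simp at hs
  have h0 : s ≠ 0 := by rintro rfl; simp at hs; linarith
  have hL := DirichletCharacter.LFunction_ne_zero_of_one_le_re η (Or.inr h1) hs.le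
  have h1' := sub_ne_zero.2 h1
  unfold Kf Gf dl
  split_ifs with h
  · subst h
    rw [DirichletCharacter.deriv_LFunctionTrivChar₁_apply_of_ne_one q h1,
      DirichletCharacter.LFunctionTrivChar₁, Function.update_of_ne h1]
    unfold DirichletCharacter.LFunctionTrivChar
    field_simp
    ring
  · simp

lemma Kf_diffAt {s : ℂ} (hs : 1 ≤ s.re) : AnalyticAt ℂ (Kf η) s := by
  have h0 : s ≠ 0 := by rintro rfl; simp at hs; linarith
  have hG : AnalyticAt ℂ (Gf η) s := (Gf_diff η).analyticAt s
  unfold Kf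
  exact (((hG.deriv.div hG (Gf_ne_zero η hs)).add analyticAt_const).neg).div analyticAt_id h0

lemma Kf_deriv {s : ℂ} (hs : 1 < s.re) :
    deriv (Kf η) s = -(deriv (deriv η.LFunction) s / η.LFunction s -
      (deriv η.LFunction s / η.LFunction s) ^ 2) / s +
      (deriv η.LFunction s / η.LFunction s) / s ^ 2 + dl η / (s - 1) ^ 2 := by
  have h1 : s ≠ 1 := by rintro rfl; simp at hs
  have h0 : s ≠ 0 := by rintro rfl; simp at hs; linarith
  have hL := DirichletCharacter.LFunction_ne_zero_of_one_le_re η (Or.inr h1) hs.le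
  have h1' := sub_ne_zero.2 h1
  have hE : Kf η =ᶠ[𝓝 s] fun s => -(deriv η.LFunction s / η.LFunction s) / s - dl η / (s - 1) := by
    filter_upwards [(isOpen_lt continuous_const Complex.continuous_re).mem_nhds hs] with z hz
    exact Kf_eq η hz
  rw [hE.deriv_eq]
  have hd : DifferentiableOn ℂ η.LFunction {z | z ≠ 1} := fun z hz =>
    (DirichletCharacter.differentiableAt_LFunction η z (Or.inl hz)).differentiableWithinAt
  have hA : AnalyticAt ℂ η.LFunction s := hd.analyticAt (isOpen_ne.mem_nhds h1)
  have d1 := hA.differentiableAt.hasDerivAt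
  have d2 := hA.deriv.differentiableAt.hasDerivAt
  have := (((d2.div d1 hL).neg.div (hasDerivAt_id s) h0).sub
    ((hasDerivAt_const s (dl η)).div ((hasDerivAt_id s).sub_const 1) h1'))
  refine HasDerivAt.deriv (this.congr_deriv ?_)
  simp only [id, Pi.neg_apply, Pi.div_apply]
  field_simp
  ring

lemma log_pow_bound {t : ℝ} (ht : 10 ≤ t) :
    Real.log t ^ 18 ≤ 72 ^ 18 * t ^ (1 / 4 : ℝ) := by
  have h := Real.log_le_rpow_div (x := t) (ε := 1 / 72) (by linarith) (by norm_num)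
  have h2 := two_le_log (t := t) (by linarith)
  calc Real.log t ^ 18 ≤ (72 * t ^ (1 / 72 : ℝ)) ^ 18 := by
        gcongr
        linarith
    _ = _ := by
      rw [mul_pow, ← Real.rpow_natCast (t ^ (1 / 72 : ℝ)), ← Real.rpow_mul (by linarith)]
      norm_num

lemma Kf_deriv_large : ∃ C : ℝ, 0 < C ∧ ∀ s : ℂ, 10 ≤ |s.im| → 1 < s.re → s.re ≤ 2 →
    ‖deriv (Kf η) s‖ ≤ C * (1 + |s.im|) ^ (-(3 / 4) : ℝ) := by
  obtain ⟨C, hC1, hC⟩ := LFunction_derivs η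
  obtain ⟨c, hc0, hc⟩ := LFunction_lower η
  refine ⟨(C / c + (C / c) ^ 2 + C / c + 1) * (72 ^ 18 * 2), by positivity, fun s ht h1 h2 => ?_⟩
  obtain ⟨-, b1, b2⟩ := hC s ht h1.le h2
  have b0 := hc s ht h1 h2
  set l := Real.log |s.im| with hl
  have hl2 : 2 ≤ l := two_le_log (by linarith)
  have ht0 : 0 < |s.im| := by linarith
  have hLpos : 0 < ‖η.LFunction s‖ := by
    by_contra h
    have : ‖η.LFunction s‖ = 0 := le_antisymm (not_lt.1 h) (norm_nonneg _)
    rw [this] at b0; linarith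
  have a1 : ‖deriv η.LFunction s / η.LFunction s‖ ≤ C / c * l ^ 9 := by
    rw [norm_div, div_le_iff₀ hLpos]
    calc _ ≤ C * l ^ 2 := b1
      _ = C / c * l ^ 2 * c := by field_simp
      _ ≤ C / c * l ^ 2 * (‖η.LFunction s‖ * l ^ 7) := by gcongr
      _ = _ := by ring
  have a2 : ‖deriv (deriv η.LFunction) s / η.LFunction s‖ ≤ C / c * l ^ 10 := by
    rw [norm_div, div_le_iff₀ hLpos]
    calc _ ≤ C * l ^ 3 := b2
      _ = C / c * l ^ 3 * c := by field_simp
      _ ≤ C / c * l ^ 3 * (‖η.LFunction s‖ * l ^ 7) := by gcongr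
      _ = _ := by ring
  have l9 : l ^ 9 ≤ l ^ 18 := pow_le_pow_right₀ (by linarith) (by norm_num)
  have l10 : l ^ 10 ≤ l ^ 18 := pow_le_pow_right₀ (by linarith) (by norm_num)
  have l0 : 1 ≤ l ^ 18 := one_le_pow₀ (by linarith)
  have n1 : |s.im| ≤ ‖s‖ := Complex.abs_im_le_norm s
  have n2 : |s.im| ≤ ‖s - 1‖ := by simpa using Complex.abs_im_le_norm (s - 1)
  have n3 : |s.im| ≤ ‖s‖ ^ 2 := by nlinarith
  have n4 : |s.im| ≤ ‖s - 1‖ ^ 2 := by nlinarith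
  have hCc : 0 < C / c := by positivity
  have key : ‖deriv (Kf η) s‖ ≤ (C / c + (C / c) ^ 2 + C / c + 1) * l ^ 18 / |s.im| := by
    rw [Kf_deriv η h1]
    calc _ ≤ (C / c * l ^ 18 + (C / c) ^ 2 * l ^ 18) / |s.im| + (C / c * l ^ 18) / |s.im| +
          l ^ 18 / |s.im| := by
          refine (norm_add_le _ _).trans (add_le_add ((norm_add_le _ _).trans (add_le_add ?_ ?_)) ?_)
          · rw [norm_div, norm_neg]
            refine div_le_div₀ (by positivity) ((norm_sub_le _ _).trans (add_le_add ?_ ?_)) ht0 n1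
            · exact a2.trans (by gcongr)
            · rw [norm_pow]
              calc _ ≤ (C / c * l ^ 9) ^ 2 := by gcongr
                _ = _ := by ring
          · rw [norm_div, norm_pow]
            exact div_le_div₀ (by positivity) (a1.trans (by gcongr)) ht0 n3
          · rw [norm_div, norm_pow]
            exact div_le_div₀ (by positivity) ((norm_dl_le η).trans l0) ht0 n4
      _ = _ := by ring
  refine key.trans ?_
  rw [mul_div_assoc, mul_assoc]
  gcongr
  calc l ^ 18 / |s.im| ≤ 72 ^ 18 * |s.im| ^ (1 / 4 : ℝ) / |s.im| := by
        gcongr; exact log_pow_bound ht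
    _ = 72 ^ 18 * |s.im| ^ (-(3 / 4) : ℝ) := by
        rw [mul_div_assoc]
        congr 1
        nth_rw 2 [← Real.rpow_one |s.im|]
        rw [← Real.rpow_sub ht0]; norm_num
    _ ≤ 72 ^ 18 * (2 * (1 + |s.im|) ^ (-(3 / 4) : ℝ)) := by
        gcongr
        have e1 : ((1 + |s.im|) / 2) ^ (-(3 / 4) : ℝ) ≥ |s.im| ^ (-(3 / 4) : ℝ) :=
          Real.rpow_le_rpow_of_nonpos (by linarith) (by linarith) (by norm_num)
        refine e1.trans ?_
        rw [Real.div_rpow (by linarith) (by norm_num), div_eq_mul_inv, mul_comm]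
        gcongr
        rw [← Real.rpow_neg (by norm_num)]
        calc (2 : ℝ) ^ (-(-(3 / 4)) : ℝ) ≤ 2 ^ (1 : ℝ) :=
              Real.rpow_le_rpow_of_exponent_le (by norm_num) (by norm_num)
          _ = 2 := by simp
    _ = _ := by ring

lemma Kf_deriv_bound : ∃ C : ℝ, 0 < C ∧ ∀ s : ℂ, 1 < s.re → s.re ≤ 2 →
    ‖deriv (Kf η) s‖ ≤ C * (1 + |s.im|) ^ (-(3 / 4) : ℝ) := by
  obtain ⟨C, hC0, hC⟩ := Kf_deriv_large η
  have hK : IsCompact (Set.Icc (1:ℝ) 2 ×ℂ Set.Icc (-10:ℝ) 10) := isCompact_Icc.reProdIm isCompact_Icc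
  have hcont : ContinuousOn (deriv (Kf η)) (Set.Icc (1:ℝ) 2 ×ℂ Set.Icc (-10:ℝ) 10) := by
    intro s hs
    rw [Complex.mem_reProdIm] at hs
    exact (Kf_diffAt η hs.1.1).deriv.continuousAt.continuousWithinAt
  obtain ⟨M, hM⟩ := hK.exists_bound_of_continuousOn hcont
  refine ⟨max C (|M| * 11), by positivity, fun s h1 h2 => ?_⟩
  rcases le_total 10 |s.im| with h | h
  · refine (hC s h h1 h2).trans ?_
    gcongr; exact le_max_left _ _
  · have := hM s (by rw [Complex.mem_reProdIm]; exact ⟨⟨h1.le, h2⟩, abs_le.1 h⟩)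
    calc _ ≤ |M| * 11 * 11⁻¹ := by
          rw [mul_assoc]; norm_num; exact this.trans (le_abs_self _)
      _ ≤ _ := by
          gcongr
          · exact le_max_right _ _
          · calc (11:ℝ)⁻¹ = 11 ^ (-1 : ℝ) := by rw [Real.rpow_neg_one]
              _ ≤ 11 ^ (-(3/4) : ℝ) := Real.rpow_le_rpow_of_exponent_le (by norm_num) (by norm_num)
              _ ≤ _ := Real.rpow_le_rpow_of_nonpos (by positivity) (by linarith) (by norm_num)

end

section

open MeasureTheory Complex Filter Topology
variable {q : ℕ} [NeZero q] (η : DirichletCharacter ℂ q)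

noncomputable def Psi (x : ℝ) : ℂ :=
  ∑ n ∈ Finset.Icc 1 ⌊x⌋₊, η (n : ZMod q) * (ArithmeticFunction.vonMangoldt n : ℂ)

noncomputable def Ef (x : ℝ) : ℂ := Psi η x - dl η * x

noncomputable def ff (u : ℝ) : ℂ := (Set.Ioi (1 : ℝ)).indicator (Ef η) u

noncomputable def cA : ℝ := Real.log 4 + 5

lemma one_le_cA : 1 ≤ cA := by
  unfold cA
  have := Real.log_nonneg (show (1:ℝ) ≤ 4 by norm_num)
  linarith

lemma norm_twist_le (n : ℕ) :
    ‖η (n : ZMod q) * (ArithmeticFunction.vonMangoldt n : ℂ)‖ ≤ ArithmeticFunction.vonMangoldt n := by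
  rw [norm_mul, Complex.norm_real, Real.norm_of_nonneg ArithmeticFunction.vonMangoldt_nonneg]
  exact mul_le_of_le_one_left ArithmeticFunction.vonMangoldt_nonneg (η.norm_le_one _)

lemma psi_eq' (x : ℝ) :
    Chebyshev.psi x = ∑ n ∈ Finset.Icc 1 ⌊x⌋₊, ArithmeticFunction.vonMangoldt n := rfl

lemma Psi_le (x : ℝ) : ‖Psi η x‖ ≤ Chebyshev.psi x := by
  rw [psi_eq']
  exact norm_sum_le_of_le _ fun n _ => norm_twist_le η n

lemma Psi_le' {x : ℝ} (hx : 0 ≤ x) : ‖Psi η x‖ ≤ (Real.log 4 + 4) * x :=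
  (Psi_le η x).trans (Chebyshev.psi_le_const_mul_self hx)

lemma Ef_le {x : ℝ} (hx : 0 ≤ x) : ‖Ef η x‖ ≤ cA * x := by
  unfold Ef
  refine (norm_sub_le _ _).trans ?_
  have h1 := Psi_le' η hx
  have h2 : ‖dl η * (x : ℂ)‖ ≤ 1 * x := by
    rw [norm_mul, Complex.norm_real, Real.norm_of_nonneg hx]
    gcongr; exact norm_dl_le η
  unfold cA; linarith

lemma Psi_measurable : Measurable (Psi η) :=
  (measurable_from_nat (f := fun m : ℕ => ∑ n ∈ Finset.Icc 1 m,
    η (n : ZMod q) * (ArithmeticFunction.vonMangoldt n : ℂ))).comp Nat.measurable_floor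

lemma Ef_measurable : Measurable (Ef η) := by
  unfold Ef
  exact (Psi_measurable η).sub (by fun_prop)

lemma ff_measurable : Measurable (ff η) := (Ef_measurable η).indicator measurableSet_Ioi

lemma ind_conds {f : ℝ → ℂ} (hf : Measurable f) {A : ℝ} (hA : ∀ u, 0 ≤ u → ‖f u‖ ≤ A * u) :
    LocallyIntegrableOn ((Set.Ioi (1:ℝ)).indicator f) (Set.Ioi 0) ∧
    (((Set.Ioi (1:ℝ)).indicator f) =O[atTop] fun x : ℝ => x ^ (-(-1) : ℝ)) ∧
    ∀ b : ℝ, (((Set.Ioi (1:ℝ)).indicator f) =O[𝓝[>] 0] fun x : ℝ => x ^ (-b)) := by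
  refine ⟨?_, ?_, ?_⟩
  · apply LocallyIntegrable.locallyIntegrableOn
    have : (Set.Ioi (1:ℝ)).indicator f = fun u : ℝ => (u : ℂ) * ((Set.Ioi (1:ℝ)).indicator f u / u) := by
      ext u
      by_cases hu : 1 < u
      · have : (u : ℂ) ≠ 0 := by simp; linarith
        field_simp
      · rw [Set.indicator_of_notMem (by simpa using hu)]; simp
    intro x
    refine ⟨Metric.closedBall x 1, Metric.closedBall_mem_nhds x one_pos, ?_⟩
    refine Measure.integrableOn_of_bounded (M := |A| * (|x| + 1)) (measure_closedBall_lt_top).ne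
      (hf.indicator measurableSet_Ioi).aestronglyMeasurable ?_
    refine (ae_restrict_iff' measurableSet_closedBall).2 (Eventually.of_forall fun u hu => ?_)
    rw [Real.closedBall_eq_Icc, Set.mem_Icc] at hu
    by_cases hu1 : 1 < u
    · rw [Set.indicator_of_mem (by simpa using hu1)]
      refine (hA u (by linarith)).trans ?_
      gcongr
      · exact le_abs_self _
      · linarith [le_abs_self x]
    · rw [Set.indicator_of_notMem (by simpa using hu1)]; simp; positivity
  · refine Asymptotics.IsBigO.of_bound A ?_
    filter_upwards [eventually_gt_atTop 1] with u hu
    rw [Set.indicator_of_mem (by simpa using hu)]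
    refine (hA u (by linarith)).trans ?_
    rw [neg_neg, Real.rpow_one, Real.norm_of_nonneg (by linarith)]
  · intro b
    refine Asymptotics.IsBigO.of_bound 1 ?_
    have : ∀ᶠ u : ℝ in 𝓝[>] 0, u < 1 := (eventually_lt_nhds one_pos).filter_mono nhdsWithin_le_nhds
    filter_upwards [this] with u hu
    rw [Set.indicator_of_notMem (by simp; linarith)]; simp

lemma mellin_ff {s : ℂ} (hs : 1 < s.re) : mellin (ff η) (-s) = Kf η s := by
  have h1 : s ≠ 1 := by rintro rfl; simp at hs
  have h0 : s ≠ 0 := by rintro rfl; simp at hs; linarith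
  have hm : ∀ g : ℝ → ℂ, mellin ((Set.Ioi (1:ℝ)).indicator g) (-s) =
      ∫ t in Set.Ioi (1:ℝ), g t * (t : ℂ) ^ (-(s + 1)) := by
    intro g
    unfold mellin
    rw [setIntegral_eq_of_subset_of_forall_sdiff_eq_zero (s := Set.Ioi (1:ℝ)) (t := Set.Ioi (0:ℝ))
      measurableSet_Ioi]
    · refine setIntegral_congr_fun measurableSet_Ioi fun t ht => ?_
      simp only [Set.indicator_of_mem ht, smul_eq_mul]
      rw [mul_comm]; congr 2; ring
    · intro t ht; simp at ht ⊢; linarith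
    · intro t ht; simp only [Set.mem_sdiff] at ht; rw [Set.indicator_of_notMem ht.2]; simp
  have hIntg : ∀ g : ℝ → ℂ, Measurable g → (∀ u, 0 ≤ u → ‖g u‖ ≤ cA * u) →
      IntegrableOn (fun t : ℝ => g t * (t : ℂ) ^ (-(s + 1))) (Set.Ioi 1) := by
    intro g hg hA
    obtain ⟨c1, c2, c3⟩ := ind_conds hg hA
    have := mellinConvergent_of_isBigO_rpow (s := -s) c1 c2 (by simpa using hs) (c3 (-s.re - 1)) (by simp)
    refine (this.mono_set (Set.Ioi_subset_Ioi zero_le_one)).congr_fun (fun t ht => ?_) measurableSet_Ioi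
    simp only [Set.indicator_of_mem ht, smul_eq_mul]
    rw [mul_comm]; congr 2; ring
  have hP := hIntg (Psi η) (Psi_measurable η) (fun u hu => (Psi_le' η hu).trans (by
    unfold cA; gcongr; norm_num))
  have hD := hIntg (fun t => dl η * t) (by fun_prop) (fun u hu => by
    rw [norm_mul, Complex.norm_real, Real.norm_of_nonneg hu]
    gcongr; exact (norm_dl_le η).trans one_le_cA)
  have e1 : mellin (ff η) (-s) = (∫ t in Set.Ioi (1:ℝ), Psi η t * (t : ℂ) ^ (-(s + 1))) -
      ∫ t in Set.Ioi (1:ℝ), dl η * (t:ℂ) * (t : ℂ) ^ (-(s + 1)) := by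
    unfold ff
    rw [hm, ← integral_sub hP hD]
    congr 1; ext t; unfold Ef; ring
  have e2 : ∫ t in Set.Ioi (1:ℝ), dl η * (t:ℂ) * (t : ℂ) ^ (-(s + 1)) = dl η / (s - 1) := by
    have : ∫ t in Set.Ioi (1:ℝ), dl η * (t:ℂ) * (t : ℂ) ^ (-(s + 1)) =
        ∫ t in Set.Ioi (1:ℝ), dl η * (t : ℂ) ^ (-s) := by
      refine setIntegral_congr_fun measurableSet_Ioi fun t ht => ?_
      have ht0 : (t : ℂ) ≠ 0 := by simp at ht ⊢; linarith
      have h3 : -s = -(s + 1) + 1 := by ring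
      simp only [h3, Complex.cpow_add _ _ ht0, Complex.cpow_one]
      ring
    rw [this, integral_const_mul, integral_Ioi_cpow_of_lt (by simpa using hs) one_pos]
    have h1' := sub_ne_zero.2 h1
    have h2' : -s + 1 ≠ 0 := by intro h; apply h1'; linear_combination -h
    rw [Complex.ofReal_one, Complex.one_cpow]
    field_simp
    ring
  have e3 : LSeries (fun n : ℕ => η (n : ZMod q) * (ArithmeticFunction.vonMangoldt n : ℂ)) s =
      s * ∫ t in Set.Ioi (1:ℝ), Psi η t * (t : ℂ) ^ (-(s + 1)) := by
    refine LSeries_eq_mul_integral' _ zero_le_one hs ?_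
    refine Asymptotics.IsBigO.of_bound (Real.log 4 + 4) (Eventually.of_forall fun n => ?_)
    rw [Real.norm_of_nonneg (Finset.sum_nonneg fun _ _ => norm_nonneg _), Real.rpow_one,
      Real.norm_of_nonneg (Nat.cast_nonneg _)]
    refine (Finset.sum_le_sum fun k _ => norm_twist_le η k).trans ?_
    have := Chebyshev.psi_le_const_mul_self (Nat.cast_nonneg (α := ℝ) n)
    rwa [psi_eq', Nat.floor_natCast] at this
  have e4 : LSeries (fun n : ℕ => η (n : ZMod q) * (ArithmeticFunction.vonMangoldt n : ℂ)) s =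
      -deriv η.LFunction s / η.LFunction s := by
    rw [DirichletCharacter.deriv_LFunction_eq_deriv_LSeries η hs,
      DirichletCharacter.LFunction_eq_LSeries η hs]
    exact DirichletCharacter.LSeries_twist_vonMangoldt_eq η hs
  rw [e1, e2, Kf_eq η hs]
  congr 1
  rw [eq_div_iff h0, mul_comm, ← e3, e4, neg_div]

lemma mellin_log_ff {s : ℂ} (hs : 1 < s.re) :
    mellin (fun t => Real.log t • ff η t) (-s) = - deriv (Kf η) s := by
  obtain ⟨c1, c2, c3⟩ := ind_conds (Ef_measurable η) (fun u hu => Ef_le η hu)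
  have := (mellin_hasDerivAt_of_isBigO_rpow (s := -s) c1 c2 (by simpa using hs) (c3 (-s.re - 1))
    (by simp)).2
  have h2 : HasDerivAt (fun z => mellin (ff η) (-z))
      (mellin (fun t => Real.log t • ff η t) (-s) * (-1)) s :=
    HasDerivAt.comp (h₂ := mellin (ff η)) s this (hasDerivAt_neg s)
  have hE : Kf η =ᶠ[𝓝 s] fun z => mellin (ff η) (-z) := by
    filter_upwards [(isOpen_lt continuous_const Complex.continuous_re).mem_nhds hs] with z hz
    exact (mellin_ff η hz).symm
  rw [hE.deriv_eq, h2.deriv]; ring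

end

section

open MeasureTheory Complex Filter Topology
variable {q : ℕ} [NeZero q] (η : DirichletCharacter ℂ q)

noncomputable def gs (σ u : ℝ) : ℂ :=
  Real.exp ((1 + σ) * u) • (Real.log (Real.exp (-u)) • ff η (Real.exp (-u)))

lemma gs_measurable (σ : ℝ) : Measurable (gs η σ) := by
  unfold gs
  have : Measurable fun u : ℝ => ff η (Real.exp (-u)) := (ff_measurable η).comp (by fun_prop)
  fun_prop

lemma gs_zero (σ : ℝ) {u : ℝ} (hu : 0 ≤ u) : gs η σ u = 0 := by
  unfold gs ff
  rw [Set.indicator_of_notMem]; · simp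
  simpa using hu

lemma gs_norm (σ : ℝ) {u : ℝ} (hu : u < 0) :
    ‖gs η σ u‖ = Real.exp (σ * u) * |u| * (‖Ef η (Real.exp (-u))‖ * Real.exp u) := by
  unfold gs ff
  rw [Set.indicator_of_mem (by simpa using hu), norm_smul, norm_smul, Real.log_exp,
    Real.norm_eq_abs, Real.abs_exp, Real.norm_eq_abs, abs_neg, add_mul, one_mul, Real.exp_add]
  ring

lemma Ef_exp_le (u : ℝ) : ‖Ef η (Real.exp (-u))‖ * Real.exp u ≤ cA := by
  have := Ef_le η (Real.exp_pos (-u)).le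
  calc _ ≤ cA * Real.exp (-u) * Real.exp u := by gcongr
    _ = cA := by rw [mul_assoc, ← Real.exp_add]; simp

lemma gs_bound {σ : ℝ} (hσ : 0 < σ) (u : ℝ) :
    ‖gs η σ u‖ ≤ (Set.Iic (0:ℝ)).indicator (fun u => 2 * cA / σ * Real.exp (σ / 2 * u)) u := by
  rcases le_or_gt 0 u with hu | hu
  · rw [gs_zero η σ hu, norm_zero]
    apply Set.indicator_nonneg
    intro x _
    have := one_le_cA
    positivity
  · rw [Set.indicator_of_mem (by simpa using hu.le), gs_norm η σ hu]
    have h1 := Ef_exp_le η u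
    have h2 : |u| ≤ 2 / σ * Real.exp (-(σ / 2 * u)) := by
      rw [abs_of_neg hu]
      have := Real.add_one_le_exp (-(σ / 2 * u))
      calc -u = 2 / σ * (-(σ / 2 * u)) := by field_simp
        _ ≤ _ := by gcongr; linarith
    have h3 : Real.exp (σ / 2 * u) = Real.exp (σ * u) * Real.exp (-(σ / 2 * u)) := by
      rw [← Real.exp_add]; congr 1; ring
    calc _ ≤ Real.exp (σ * u) * (2 / σ * Real.exp (-(σ / 2 * u))) * cA := by gcongr
      _ = _ := by rw [h3]; ring

lemma gs_integrable {σ : ℝ} (hσ : 0 < σ) : Integrable (gs η σ) := by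
  refine Integrable.mono' (g := (Set.Iic (0:ℝ)).indicator (fun u => 2 * cA / σ * Real.exp (σ / 2 * u)))
    ?_ (gs_measurable η σ).aestronglyMeasurable (Eventually.of_forall (gs_bound η hσ))
  rw [integrable_indicator_iff measurableSet_Iic]
  exact (integrableOn_exp_mul_Iic (by positivity) 0).const_mul _

lemma gs_sq_integrable {σ : ℝ} (hσ : 0 < σ) : Integrable (fun u => ‖gs η σ u‖ ^ 2) := by
  refine Integrable.mono' (g := (Set.Iic (0:ℝ)).indicator (fun u => (2 * cA / σ) ^ 2 * Real.exp (σ * u)))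
    ?_ ((gs_measurable η σ).norm.pow_const 2).aestronglyMeasurable (Eventually.of_forall fun u => ?_)
  · rw [integrable_indicator_iff measurableSet_Iic]
    exact (integrableOn_exp_mul_Iic (by positivity) 0).const_mul _
  · have h := gs_bound η hσ u
    rw [Real.norm_of_nonneg (by positivity)]
    by_cases hu : u ∈ Set.Iic (0:ℝ)
    · rw [Set.indicator_of_mem hu] at h ⊢
      calc _ ≤ (2 * cA / σ * Real.exp (σ / 2 * u)) ^ 2 := by gcongr
        _ = _ := by
          rw [mul_pow, ← Real.exp_nat_mul]; congr 2; push_cast; ring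
    · rw [Set.indicator_of_notMem hu] at h ⊢
      have : ‖gs η σ u‖ = 0 := le_antisymm h (norm_nonneg _)
      rw [this]; norm_num

lemma gs_L2 : ∃ M : ℝ, 0 ≤ M ∧ ∀ σ : ℝ, 0 < σ → σ ≤ 1 → ∫ u, ‖gs η σ u‖ ^ 2 ≤ M := by
  obtain ⟨C, hC0, hC⟩ := Kf_deriv_bound η
  have hI : Integrable (fun w : ℝ => (1 + ‖w‖) ^ (-(3 / 2) : ℝ)) :=
    integrable_one_add_norm (by simp; norm_num)
  refine ⟨∫ w : ℝ, C ^ 2 * (1 + ‖w‖) ^ (-(3 / 2) : ℝ),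
    integral_nonneg fun w => by positivity, fun σ h0 h1 => ?_⟩
  rw [plancherel (gs_integrable η h0) ((memLp_two_iff_integrable_sq_norm
    (gs_measurable η σ).aestronglyMeasurable).2 (gs_sq_integrable η h0))]
  refine integral_mono_of_nonneg (Eventually.of_forall fun w => by positivity) (hI.const_mul _)
    (Eventually.of_forall fun w => ?_)
  simp only
  set s : ℂ := (1 + σ : ℝ) - (2 * Real.pi * w : ℝ) * I with hs
  have hre : s.re = 1 + σ := by simp [hs]
  have him : s.im = -(2 * Real.pi * w) := by simp [hs]
  have key := mellin_eq_fourier (fun t => Real.log t • ff η t) (s := -s)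
  rw [mellin_log_ff η (by rw [hre]; linarith)] at key
  have e1 : (-s).im / (2 * Real.pi) = w := by
    rw [Complex.neg_im, him]; field_simp
  rw [e1, Complex.neg_re, hre, neg_neg] at key
  have e2 : ‖FourierTransform.fourier (gs η σ) w‖ = ‖deriv (Kf η) s‖ := by
    rw [← norm_neg (deriv (Kf η) s), key]; rfl
  rw [e2]
  have := hC s (by rw [hre]; linarith) (by rw [hre]; linarith)
  have h3 : ‖deriv (Kf η) s‖ ≤ C * (1 + ‖w‖) ^ (-(3 / 4) : ℝ) := by
    refine this.trans ?_
    gcongr C * ?_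
    refine Real.rpow_le_rpow_of_nonpos (by positivity) ?_ (by norm_num)
    rw [him, abs_neg, abs_mul, abs_of_pos (by positivity), Real.norm_eq_abs]
    have := Real.pi_gt_three
    nlinarith [abs_nonneg w]
  calc _ ≤ (C * (1 + ‖w‖) ^ (-(3 / 4) : ℝ)) ^ 2 := by gcongr
    _ = _ := by
      rw [mul_pow, ← Real.rpow_natCast ((1 + ‖w‖) ^ (-(3 / 4) : ℝ)), ← Real.rpow_mul (by positivity)]
      norm_num

lemma int_Ef : ∃ M : ℝ, 0 ≤ M ∧ ∀ x : ℝ, 1 ≤ x → ∫ v in Set.Ioc 1 x, ‖Ef η (x / v)‖ ≤ M * x := by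
  obtain ⟨M, hM0, hM⟩ := gs_L2 η
  have hA := one_le_cA
  refine ⟨Real.exp 2 * M + 2 * cA * Real.pi, by positivity, fun x hx => ?_⟩
  have hx0 : 0 < x := by linarith
  have hlog : 0 ≤ Real.log x := Real.log_nonneg hx
  have himg : (fun u => x * Real.exp u) '' Set.Ioc (-Real.log x) 0 = Set.Ioc 1 x := by
    ext v
    simp only [Set.mem_image, Set.mem_Ioc]
    constructor
    · rintro ⟨u, ⟨h1, h2⟩, rfl⟩
      constructor
      · have := Real.exp_lt_exp.2 h1
        rw [Real.exp_neg, Real.exp_log hx0] at this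
        calc 1 = x * x⁻¹ := by field_simp
          _ < _ := by gcongr
      · have := Real.exp_le_one_iff.2 h2
        nlinarith
    · rintro ⟨h1, h2⟩
      refine ⟨Real.log (v / x), ⟨?_, ?_⟩, ?_⟩
      · rw [Real.log_div (by linarith) hx0.ne']
        linarith [Real.log_pos h1]
      · exact Real.log_nonpos (by positivity) (by rw [div_le_one hx0]; exact h2)
      · rw [Real.exp_log (by positivity)]; field_simp
  rw [← himg, integral_image_eq_integral_abs_deriv_smul (f' := fun u => x * Real.exp u)
    measurableSet_Ioc (fun u _ => ((Real.hasDerivAt_exp u).const_mul x).hasDerivWithinAt)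
    (fun a _ b _ h => by
      have : Real.exp a = Real.exp b := mul_left_cancel₀ hx0.ne' h
      exact Real.exp_injective this)]
  set V := Real.log x + 1 with hV
  have hV1 : 1 ≤ V := by linarith
  have hσ : 0 < 1 / V := by positivity
  have hσ1 : 1 / V ≤ 1 := by rw [div_le_one (by linarith)]; exact hV1
  have hIg : Integrable fun u => Real.exp 2 * ‖gs η (1 / V) u‖ ^ 2 + 2 * cA * (1 + u ^ 2)⁻¹ :=
    ((gs_sq_integrable η hσ).const_mul _).add (integrable_inv_one_add_sq.const_mul _)
  calc _ ≤ ∫ u in Set.Ioc (-Real.log x) 0,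
        x * (Real.exp 2 * ‖gs η (1 / V) u‖ ^ 2 + 2 * cA * (1 + u ^ 2)⁻¹) := by
        refine integral_mono_of_nonneg (Eventually.of_forall fun w => by positivity)
          (hIg.const_mul _).integrableOn ?_
        refine (ae_restrict_iff' measurableSet_Ioc).2 (Eventually.of_forall fun u hu => ?_)
        simp only [smul_eq_mul]
        rw [abs_of_pos (by positivity), mul_assoc]
        gcongr
        have e1 : x / (x * Real.exp u) = Real.exp (-u) := by
          rw [Real.exp_neg]; field_simp
        rw [e1]
        have hh := Ef_exp_le η u
        set h := ‖Ef η (Real.exp (-u))‖ * Real.exp u with hh'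
        have hh0 : 0 ≤ h := by positivity
        rw [mul_comm]
        change h ≤ _
        rcases le_total (u ^ 2) 1 with hu1 | hu1
        · have : cA ≤ 2 * cA * (1 + u ^ 2)⁻¹ := by
            rw [← div_eq_mul_inv, le_div_iff₀ (by positivity)]
            nlinarith
          have : 0 ≤ Real.exp 2 * ‖gs η (1 / V) u‖ ^ 2 := by positivity
          linarith
        · have hu0 : u < 0 := lt_of_le_of_ne hu.2 (by rintro rfl; norm_num at hu1)
          have hg : h ^ 2 * u ^ 2 ≤ Real.exp 2 * ‖gs η (1 / V) u‖ ^ 2 := by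
            rw [gs_norm η _ hu0, ← hh']
            clear_value h
            rw [mul_pow, mul_pow, sq_abs, ← Real.exp_nat_mul,
              ← mul_assoc, ← mul_assoc, ← Real.exp_add]
            have : 1 ≤ Real.exp (2 + (2:ℕ) * (1 / V * u)) := by
              rw [Real.one_le_exp_iff]
              have : -1 ≤ 1 / V * u := by
                rw [one_div, inv_mul_eq_div, le_div_iff₀ (by linarith)]
                linarith [hu.1]
              push_cast; linarith
            nlinarith [mul_nonneg (sq_nonneg h) (sq_nonneg u)]
          have hk : h ≤ h ^ 2 * u ^ 2 + 2 * cA * (1 + u ^ 2)⁻¹ := by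
            have h1 : (1:ℝ) ≤ 2 * cA * (1 + u ^ 2)⁻¹ * u ^ 2 := by
              rw [← div_eq_mul_inv, div_mul_eq_mul_div, le_div_iff₀ (by positivity)]
              nlinarith
            set B := 2 * cA * (1 + u ^ 2)⁻¹ with hB
            have hB0 : 0 ≤ B := by positivity
            by_contra hcon
            push Not at hcon
            nlinarith [sq_nonneg (h * u ^ 2 - 1), mul_nonneg hB0 hh0]
          linarith
    _ ≤ ∫ u, x * (Real.exp 2 * ‖gs η (1 / V) u‖ ^ 2 + 2 * cA * (1 + u ^ 2)⁻¹) := by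
        refine setIntegral_le_integral (hIg.const_mul _) (Eventually.of_forall fun u => ?_)
        simp only [Pi.zero_apply]; positivity
    _ = x * (Real.exp 2 * (∫ u, ‖gs η (1 / V) u‖ ^ 2) + 2 * cA * Real.pi) := by
        rw [integral_const_mul, integral_add ((gs_sq_integrable η hσ).const_mul _)
          (integrable_inv_one_add_sq.const_mul _), integral_const_mul, integral_const_mul,
          integral_univ_inv_one_add_sq]
    _ ≤ x * (Real.exp 2 * M + 2 * cA * Real.pi) := by
        gcongr; exact hM _ hσ hσ1
    _ = _ := by ring

end

section

open MeasureTheory Complex Filter Topology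
variable {q : ℕ} [NeZero q] (η : DirichletCharacter ℂ q)

lemma Ef_diff {y z : ℝ} (hy : 0 ≤ y) (hyz : y ≤ z) :
    ‖Ef η z - Ef η y‖ ≤ (Chebyshev.psi z + z) - (Chebyshev.psi y + y) := by
  have hf : ⌊y⌋₊ ≤ ⌊z⌋₊ := Nat.floor_mono hyz
  have e1 : Psi η z = Psi η y + ∑ n ∈ Finset.Ioc ⌊y⌋₊ ⌊z⌋₊,
      η (n : ZMod q) * (ArithmeticFunction.vonMangoldt n : ℂ) :=
    (Finset.sum_Ioc_consecutive _ (Nat.zero_le _) hf).symm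
  have e2 : Chebyshev.psi z = Chebyshev.psi y + ∑ n ∈ Finset.Ioc ⌊y⌋₊ ⌊z⌋₊,
      ArithmeticFunction.vonMangoldt n :=
    (Finset.sum_Ioc_consecutive _ (Nat.zero_le _) hf).symm
  have e3 : Ef η z - Ef η y = (∑ n ∈ Finset.Ioc ⌊y⌋₊ ⌊z⌋₊,
      η (n : ZMod q) * (ArithmeticFunction.vonMangoldt n : ℂ)) - dl η * ((z - y : ℝ) : ℂ) := by
    unfold Ef; rw [e1]; push_cast; ring
  rw [e3, e2]
  have h1 : ‖∑ n ∈ Finset.Ioc ⌊y⌋₊ ⌊z⌋₊,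
      η (n : ZMod q) * (ArithmeticFunction.vonMangoldt n : ℂ)‖ ≤ ∑ n ∈ Finset.Ioc ⌊y⌋₊ ⌊z⌋₊,
      ArithmeticFunction.vonMangoldt n := norm_sum_le_of_le _ fun n _ => norm_twist_le η n
  have h2 : ‖dl η * ((z - y : ℝ) : ℂ)‖ ≤ 1 * (z - y) := by
    rw [norm_mul, Complex.norm_real, Real.norm_of_nonneg (by linarith)]
    have := norm_dl_le η
    gcongr
  have := norm_sub_le (∑ n ∈ Finset.Ioc ⌊y⌋₊ ⌊z⌋₊,
      η (n : ZMod q) * (ArithmeticFunction.vonMangoldt n : ℂ)) (dl η * ((z - y : ℝ) : ℂ))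
  linarith

lemma sum_Ef : ∃ C : ℝ, 0 ≤ C ∧ ∀ x : ℝ, 1 ≤ x →
    ∑ n ∈ Finset.Icc 1 ⌊x⌋₊, ‖Ef η (x / n)‖ ≤ C * x := by
  obtain ⟨M, hM0, hM⟩ := int_Ef η
  have hA := one_le_cA
  refine ⟨M + 2 * cA, by positivity, fun x hx => ?_⟩
  have hx0 : 0 < x := by linarith
  set N := ⌊x⌋₊ with hN
  have hN1 : 1 ≤ N := Nat.one_le_floor_iff x |>.2 hx
  have hNx : (N : ℝ) ≤ x := Nat.floor_le hx0.le
  have hmeas : Measurable fun v : ℝ => ‖Ef η (x / v)‖ :=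
    ((Ef_measurable η).comp (measurable_const.div measurable_id)).norm
  have hIntg : IntegrableOn (fun v : ℝ => ‖Ef η (x / v)‖) (Set.Ioc 1 x) := by
    refine Measure.integrableOn_of_bounded (M := cA * x) (by simp) hmeas.aestronglyMeasurable ?_
    refine (ae_restrict_iff' measurableSet_Ioc).2 (Eventually.of_forall fun v hv => ?_)
    rw [norm_norm]
    refine (Ef_le η (div_nonneg hx0.le (by linarith [hv.1]))).trans ?_
    gcongr
    exact div_le_self hx0.le hv.1.le
  let F : ℝ → ℝ := fun v => Chebyshev.psi (x / v) + x / v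
  have hii : ∀ a b : ℕ, 1 ≤ a → a ≤ b → b ≤ N →
      IntervalIntegrable (fun v : ℝ => ‖Ef η (x / v)‖) volume a b := by
    intro a b ha hab hb
    rw [intervalIntegrable_iff_integrableOn_Ioc_of_le (by exact_mod_cast hab)]
    refine hIntg.mono_set (Set.Ioc_subset_Ioc (by exact_mod_cast ha) ?_)
    exact (Nat.cast_le.2 hb).trans hNx
  have step : ∀ n : ℕ, 1 ≤ n → n + 1 ≤ N → ‖Ef η (x / n)‖ ≤
      (∫ v in (n:ℝ)..(n+1:ℕ), ‖Ef η (x / v)‖) + (F n - F (n + 1 : ℕ)) := by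
    intro n hn hnN
    have hn0 : (0:ℝ) < n := by exact_mod_cast hn
    have h1 : ∫ v in (n:ℝ)..(n+1:ℕ), (‖Ef η (x / n)‖ - (F n - F (n + 1 : ℕ))) =
        ‖Ef η (x / n)‖ - (F n - F (n + 1 : ℕ)) := by
      rw [intervalIntegral.integral_const]; push_cast; simp
    have h2 : ∫ v in (n:ℝ)..(n+1:ℕ), (‖Ef η (x / n)‖ - (F n - F (n + 1 : ℕ))) ≤
        ∫ v in (n:ℝ)..(n+1:ℕ), ‖Ef η (x / v)‖ := by
      refine intervalIntegral.integral_mono_on (by push_cast; linarith)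
        intervalIntegrable_const (hii n (n+1) hn (by omega) hnN) fun v hv => ?_
      have hv0 : 0 < v := lt_of_lt_of_le hn0 hv.1
      have d1 : x / v ≤ x / n := by gcongr; exact hv.1
      have d2 : x / (n + 1 : ℕ) ≤ x / v := by gcongr; exact hv.2
      have b := Ef_diff η (by positivity) d1
      have c := Chebyshev.psi_mono d2
      have t := norm_sub_norm_le (Ef η (x / n)) (Ef η (x / v))
      simp only [F]
      linarith
    linarith
  have main : ∀ m : ℕ, 1 ≤ m → m ≤ N → ∑ n ∈ Finset.Ico 1 m, ‖Ef η (x / n)‖ ≤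
      (∫ v in (1:ℝ)..m, ‖Ef η (x / v)‖) + (F 1 - F m) := by
    intro m hm
    induction m, hm using Nat.le_induction with
    | base => intro _; simp
    | succ m hm ih =>
      intro hmN
      rw [Finset.sum_Ico_succ_top hm]
      have h1 := ih (by omega)
      have h2 := step m hm hmN
      have h3 := intervalIntegral.integral_add_adjacent_intervals
        (by simpa using hii 1 m le_rfl hm (by omega)) (hii m (m+1) hm (by omega) hmN)
      linarith
  have hN' := main N hN1 le_rfl
  have hI : (∫ v in (1:ℝ)..N, ‖Ef η (x / v)‖) ≤ M * x := by
    refine le_trans ?_ (hM x hx)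
    rw [intervalIntegral.integral_of_le (by exact_mod_cast hN1)]
    exact setIntegral_mono_set hIntg (Eventually.of_forall fun _ => norm_nonneg _)
      (Set.Ioc_subset_Ioc le_rfl hNx).eventuallyLE
  have hF1 : F 1 ≤ cA * x := by
    simp only [F, div_one]
    have := Chebyshev.psi_le_const_mul_self hx0.le
    unfold cA; linarith
  have hFN : 0 ≤ F N := by
    simp only [F]
    have := Chebyshev.psi_nonneg (x / N)
    positivity
  have hlast : ‖Ef η (x / N)‖ ≤ cA * x := by
    refine (Ef_le η (by positivity)).trans ?_
    gcongr
    exact div_le_self hx0.le (by exact_mod_cast hN1)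
  have e : ∑ n ∈ Finset.Icc 1 N, ‖Ef η (x / n)‖ = ∑ n ∈ Finset.Ico 1 N, ‖Ef η (x / n)‖ + ‖Ef η (x / N)‖ := by
    rw [← Finset.sum_Ico_succ_top hN1]; rfl
  rw [e]; nlinarith

end

section

open Filter Topology
open scoped ArithmeticFunction.vonMangoldt ArithmeticFunction.zeta

def thZ : MulChar (ZMod 18) ℤ where
  toFun a := if a.val.gcd 6 = 1 then (if a.val % 3 = 1 then 1 else -1) else 0
  map_one' := by decide
  map_mul' := by decide
  map_nonunit' := by
    intro a ha
    rw [if_neg]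
    intro h
    apply ha
    rw [← ZMod.natCast_zmod_val a, ZMod.isUnit_iff_coprime]
    have : (18 : ℕ) ∣ 6 ^ 2 := by norm_num
    exact Nat.Coprime.coprime_dvd_right this (Nat.Coprime.pow_right 2 h)

noncomputable def th : DirichletCharacter ℂ 18 := thZ.ringHomComp (Int.castRingHom ℂ)

lemma th_apply (n : ℕ) : th (n : ZMod 18) =
    if n.gcd 6 = 1 then (if n % 3 = 1 then 1 else -1) else 0 := by
  have h1 : th (n : ZMod 18) = ((thZ (n : ZMod 18) : ℤ) : ℂ) := rfl
  have h2 : thZ (n : ZMod 18) = if (n : ZMod 18).val.gcd 6 = 1 then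
    (if (n : ZMod 18).val % 3 = 1 then 1 else -1) else 0 := rfl
  rw [h1, h2, ZMod.val_natCast]
  have h3 : (n % 18).gcd 6 = n.gcd 6 := by
    rw [Nat.gcd_comm, Nat.gcd_rec, Nat.gcd_comm n 6, Nat.gcd_rec 6 n, Nat.mod_mod_of_dvd _ (by norm_num)]
  have h4 : n % 18 % 3 = n % 3 := Nat.mod_mod_of_dvd _ (by norm_num)
  simp only [h3, h4]
  split_ifs <;> simp

variable (χ : DirichletCharacter ℂ 18)

noncomputable def fA : ArithmeticFunction ℂ where
  toFun n := if ∀ p ∈ n.primeFactors, p % 3 = 2 then χ (n : ZMod 18) else 0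
  map_zero' := by
    simp
    exact MulChar.map_nonunit χ (by decide)

lemma fA_apply (n : ℕ) : fA χ n = if ∀ p ∈ n.primeFactors, p % 3 = 2 then χ (n : ZMod 18) else 0 := rfl

lemma fA_norm_le (n : ℕ) : ‖fA χ n‖ ≤ 1 := by
  rw [fA_apply]; split_ifs
  · exact χ.norm_le_one _
  · simp

lemma fA_one : fA χ 1 = 1 := by simp [fA_apply]

lemma fA_mul (m n : ℕ) : fA χ (m * n) = fA χ m * fA χ n := by
  rcases eq_or_ne m 0 with rfl | hm
  · simp
  rcases eq_or_ne n 0 with rfl | hn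
  · simp
  simp only [fA_apply, Nat.primeFactors_mul hm hn, Finset.mem_union, or_imp, forall_and]
  push_cast
  rw [map_mul]
  split_ifs <;> simp_all

lemma fA_pow (m k : ℕ) : fA χ (m ^ k) = fA χ m ^ k := by
  induction k with
  | zero => simp [fA_one]
  | succ k ih => rw [pow_succ, fA_mul, ih, pow_succ]

lemma unit_of_gcd {n : ℕ} (h : n.gcd 6 ≠ 1) : χ (n : ZMod 18) = 0 := by
  apply MulChar.map_nonunit
  rw [ZMod.isUnit_iff_coprime]
  intro h2
  exact h (Nat.Coprime.coprime_dvd_right (by norm_num) h2)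

lemma fA_prime {p : ℕ} (hp : p.Prime) :
    fA χ p = (χ (p : ZMod 18) - (χ * th) (p : ZMod 18)) / 2 := by
  rw [fA_apply, MulChar.mul_apply, th_apply]
  simp only [hp.primeFactors, Finset.mem_singleton, forall_eq]
  by_cases h : p.gcd 6 = 1
  · have h3 : p % 3 ≠ 0 := by
      intro h0
      have : 3 ∣ p.gcd 6 := Nat.dvd_gcd (Nat.dvd_of_mod_eq_zero h0) (by norm_num)
      rw [h] at this; norm_num at this
    have : p % 3 = 1 ∨ p % 3 = 2 := by omega
    rcases this with h' | h' <;> simp [h, h']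
  · rw [unit_of_gcd χ h]; simp

lemma fA_prime_of_triv (h : χ * th = 1) {p : ℕ} (hp : p.Prime) :
    fA χ p = 0 ∨ fA χ p = -1 := by
  rw [fA_apply]
  simp only [hp.primeFactors, Finset.mem_singleton, forall_eq]
  split_ifs with h3
  · by_cases h6 : p.gcd 6 = 1
    · right
      have hu : IsUnit (p : ZMod 18) := by
        rw [ZMod.isUnit_iff_coprime]
        exact Nat.Coprime.coprime_dvd_right (show 18 ∣ 6 ^ 2 by norm_num) (Nat.Coprime.pow_right 2 h6)
      have h1 : (χ * th) (p : ZMod 18) = 1 := by rw [h]; exact MulChar.one_apply hu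
      rw [MulChar.mul_apply, th_apply, if_pos h6, if_neg (by omega)] at h1
      linear_combination -h1
    · left; exact unit_of_gcd χ h6
  · left; rfl

noncomputable def gA : ArithmeticFunction ℂ where
  toFun n := fA χ n * (Λ n : ℂ)
  map_zero' := by simp

lemma gA_apply (n : ℕ) : gA χ n = fA χ n * (Λ n : ℂ) := rfl

lemma fA_mul_gA (n : ℕ) : (fA χ * gA χ) n = fA χ n * (Real.log n : ℂ) := by
  rw [ArithmeticFunction.mul_apply]
  have : ∀ x ∈ n.divisorsAntidiagonal, fA χ x.1 * gA χ x.2 = fA χ n * (Λ x.2 : ℂ) := by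
    intro x hx
    rw [gA_apply, ← mul_assoc, ← fA_mul, (Nat.mem_divisorsAntidiagonal.1 hx).1]
  rw [Finset.sum_congr rfl this, ← Finset.mul_sum]
  congr 1
  rw [← ArithmeticFunction.vonMangoldt_sum]
  push_cast
  rw [Nat.sum_divisorsAntidiagonal' (f := fun _ b => (Λ b : ℂ))]

lemma sum_f_log (N : ℕ) : ∑ n ∈ Finset.Ioc 0 N, fA χ n * (Real.log n : ℂ) =
    ∑ m ∈ Finset.Ioc 0 N, fA χ m * ∑ d ∈ Finset.Ioc 0 (N / m), fA χ d * (Λ d : ℂ) := by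
  have := ArithmeticFunction.sum_Ioc_mul_eq_sum_sum (fA χ) (gA χ) N
  simpa only [fA_mul_gA, gA_apply] using this

lemma fA_mult : (fA χ).IsMultiplicative := ⟨fA_one χ, fun _ => fA_mul χ _ _⟩

lemma conv_norm_le (h : χ * th = 1) (n : ℕ) : ‖(fA χ * (ζ : ArithmeticFunction ℂ)) n‖ ≤ 1 := by
  have hm : (fA χ * (ζ : ArithmeticFunction ℂ)).IsMultiplicative :=
    (fA_mult χ).mul ArithmeticFunction.isMultiplicative_zeta.natCast
  induction n using Nat.recOnPosPrimePosCoprime with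
  | zero => simp
  | one => rw [hm.1]; simp
  | prime_pow p k hp hk =>
    rw [ArithmeticFunction.coe_mul_zeta_apply, Nat.sum_divisors_prime_pow hp]
    simp only [fA_pow]
    rcases fA_prime_of_triv χ h hp with h0 | h0 <;> rw [h0]
    · rw [Finset.sum_eq_single 0]
      · simp
      · intro b _ hb; simp [hb]
      · simp
    · rw [neg_one_geom_sum]; split_ifs <;> simp
  | coprime a b ha hb hab iha ihb =>
    rw [hm.map_mul_of_coprime hab, norm_mul]
    exact mul_le_one₀ iha (norm_nonneg _) ihb

lemma sum_f_div (h : χ * th = 1) {x : ℝ} (hx : 1 ≤ x) :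
    ‖∑ m ∈ Finset.Ioc 0 ⌊x⌋₊, fA χ m * ((x / m : ℝ) : ℂ)‖ ≤ 2 * x := by
  have hN : (⌊x⌋₊ : ℝ) ≤ x := Nat.floor_le (by linarith)
  have h1 := ArithmeticFunction.sum_Ioc_mul_zeta_eq_sum (fA χ) ⌊x⌋₊
  have h2 : ‖∑ m ∈ Finset.Ioc 0 ⌊x⌋₊, fA χ m * ((⌊x⌋₊ / m : ℕ) : ℂ)‖ ≤ x := by
    rw [← h1]
    refine (norm_sum_le_of_le _ fun n _ => conv_norm_le χ h n).trans ?_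
    simpa using hN
  have h3 : ‖∑ m ∈ Finset.Ioc 0 ⌊x⌋₊, fA χ m * ((x / m : ℝ) : ℂ) -
      ∑ m ∈ Finset.Ioc 0 ⌊x⌋₊, fA χ m * ((⌊x⌋₊ / m : ℕ) : ℂ)‖ ≤ x := by
    rw [← Finset.sum_sub_distrib]
    refine (norm_sum_le_of_le (n := fun _ => (1:ℝ)) _ fun m _ => ?_).trans (by simpa using hN)
    rw [← mul_sub, norm_mul]
    refine mul_le_one₀ (fA_norm_le χ m) (norm_nonneg _) ?_
    rw [← Nat.floor_div_natCast]
    have e : ((x / m : ℝ) : ℂ) - ((⌊x / m⌋₊ : ℕ) : ℂ) = ((x / m - ⌊x / m⌋₊ : ℝ) : ℂ) := by push_cast; ring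
    rw [e, Complex.norm_real, Real.norm_eq_abs, abs_le]
    have := Nat.floor_le (show 0 ≤ x / m by positivity)
    have := Nat.lt_floor_add_one (x / m)
    constructor <;> linarith
  have := norm_le_norm_add_norm_sub' (∑ m ∈ Finset.Ioc 0 ⌊x⌋₊, fA χ m * ((x / m : ℝ) : ℂ))
    (∑ m ∈ Finset.Ioc 0 ⌊x⌋₊, fA χ m * ((⌊x⌋₊ / m : ℕ) : ℂ))
  linarith

noncomputable def lamN : ArithmeticFunction ℝ where
  toFun n := if n.Prime then 0 else Λ n
  map_zero' := by simp

lemma lamN_apply (n : ℕ) : lamN n = if n.Prime then 0 else Λ n := rfl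

lemma lamN_nonneg (n : ℕ) : 0 ≤ lamN n := by
  rw [lamN_apply]; split_ifs
  · rfl
  · exact ArithmeticFunction.vonMangoldt_nonneg

lemma lamN_summable : Summable fun n : ℕ => lamN n / n := by
  have := ArithmeticFunction.vonMangoldt.summable_residueClass_non_primes_div (q := 1) 0
  refine this.congr fun n => ?_
  rw [lamN_apply]
  congr 2
  unfold ArithmeticFunction.vonMangoldt.residueClass
  rw [Set.indicator_of_mem]
  exact Subsingleton.elim _ _

lemma lamN_sum : ∃ C : ℝ, 0 ≤ C ∧ ∀ N : ℕ,
    ∑ m ∈ Finset.Ioc 0 N, ∑ d ∈ Finset.Ioc 0 (N / m), lamN d ≤ C * N := by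
  refine ⟨∑' n : ℕ, lamN n / n, tsum_nonneg fun n => div_nonneg (lamN_nonneg n) n.cast_nonneg, fun N => ?_⟩
  have h1 := ArithmeticFunction.sum_Ioc_mul_zeta_eq_sum lamN N
  have h2 := ArithmeticFunction.sum_Ioc_mul_eq_sum_sum (ζ : ArithmeticFunction ℝ) lamN N
  have h3 : ∑ m ∈ Finset.Ioc 0 N, ∑ d ∈ Finset.Ioc 0 (N / m), lamN d =
      ∑ n ∈ Finset.Ioc 0 N, lamN n * ((N / n : ℕ) : ℝ) := by
    rw [← h1, mul_comm, h2]
    refine Finset.sum_congr rfl fun m hm => ?_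
    rw [ArithmeticFunction.natCoe_apply, ArithmeticFunction.zeta_apply_ne (by simp at hm; omega)]
    simp
  rw [h3]
  calc _ ≤ ∑ n ∈ Finset.Ioc 0 N, lamN n / n * N := by
        refine Finset.sum_le_sum fun n _ => ?_
        rw [div_mul_eq_mul_div, mul_div_assoc]
        gcongr
        · exact lamN_nonneg n
        · exact Nat.cast_div_le
    _ = (∑ n ∈ Finset.Ioc 0 N, lamN n / n) * N := by rw [Finset.sum_mul]
    _ ≤ _ := by
        gcongr
        exact lamN_summable.sum_le_tsum _ fun n _ => div_nonneg (lamN_nonneg n) n.cast_nonneg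

lemma gA_decomp (d : ℕ) :
    ‖fA χ d * (Λ d : ℂ) - (χ (d : ZMod 18) * (Λ d : ℂ) - (χ * th) (d : ZMod 18) * (Λ d : ℂ)) / 2‖ ≤
      2 * lamN d := by
  rw [lamN_apply]
  split_ifs with hp
  · rw [fA_prime χ hp]
    apply le_of_eq
    rw [mul_zero, norm_eq_zero]; ring
  · have e : fA χ d * (Λ d : ℂ) - (χ (d : ZMod 18) * (Λ d : ℂ) - (χ * th) (d : ZMod 18) * (Λ d : ℂ)) / 2 =
      (fA χ d - (χ (d : ZMod 18) - (χ * th) (d : ZMod 18)) / 2) * (Λ d : ℂ) := by ring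
    rw [e, norm_mul, Complex.norm_real, Real.norm_of_nonneg ArithmeticFunction.vonMangoldt_nonneg]
    gcongr
    have h1 := fA_norm_le χ d
    have h2 := χ.norm_le_one (d : ZMod 18)
    have h3 := (χ * th).norm_le_one (d : ZMod 18)
    have h4 := norm_sub_le (fA χ d) ((χ (d : ZMod 18) - (χ * th) (d : ZMod 18)) / 2)
    have h5 := norm_sub_le (χ (d : ZMod 18)) ((χ * th) (d : ZMod 18))
    rw [norm_div, Complex.norm_ofNat] at h4
    linarith

lemma sum_inv_sqrt (N : ℕ) : ∑ n ∈ Finset.Ioc 0 N, 1 / √(n : ℝ) ≤ 2 * √(N : ℝ) := by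
  induction N with
  | zero => simp
  | succ N ih =>
    rw [Finset.sum_Ioc_succ_top (by omega)]
    have h1 : 0 < √((N + 1 : ℕ) : ℝ) := Real.sqrt_pos.2 (by positivity)
    have h2 : 1 / √((N + 1 : ℕ) : ℝ) ≤ 2 * √((N + 1 : ℕ) : ℝ) - 2 * √(N : ℝ) := by
      rw [div_le_iff₀ h1]
      have a := Real.sq_sqrt (show (0:ℝ) ≤ ((N + 1 : ℕ) : ℝ) by positivity)
      have b := Real.sq_sqrt (show (0:ℝ) ≤ (N : ℝ) by positivity)
      push_cast at a ⊢
      nlinarith [sq_nonneg (√((N:ℝ) + 1) - √(N:ℝ))]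
    linarith

lemma sum_log_div {x : ℝ} (hx : 1 ≤ x) :
    ‖∑ n ∈ Finset.Ioc 0 ⌊x⌋₊, fA χ n * (Real.log (x / n) : ℂ)‖ ≤ 4 * x := by
  have hN : (⌊x⌋₊ : ℝ) ≤ x := Nat.floor_le (by linarith)
  have hx0 : 0 < x := by linarith
  calc _ ≤ ∑ n ∈ Finset.Ioc 0 ⌊x⌋₊, 2 * √x * (1 / √(n:ℝ)) := by
        refine norm_sum_le_of_le _ fun n hn => ?_
        rw [Finset.mem_Ioc] at hn
        have hn0 : (0:ℝ) < n := by exact_mod_cast hn.1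
        have hnx : (n:ℝ) ≤ x := (Nat.cast_le.2 hn.2).trans hN
        rw [norm_mul, Complex.norm_real, Real.norm_of_nonneg
          (Real.log_nonneg (by rw [le_div_iff₀ hn0]; linarith))]
        have h1 : Real.log (x / n) ≤ 2 * √(x / n) := by
          have := Real.log_le_rpow_div (x := x / n) (ε := 1 / 2) (by positivity) (by norm_num)
          rw [← Real.sqrt_eq_rpow] at this; linarith
        rw [Real.sqrt_div hx0.le] at h1
        calc _ ≤ 1 * (2 * (√x / √(n:ℝ))) := by
              gcongr
              · exact Real.log_nonneg (by rw [le_div_iff₀ hn0]; linarith)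
              · exact fA_norm_le χ n
          _ = _ := by ring
    _ = 2 * √x * ∑ n ∈ Finset.Ioc 0 ⌊x⌋₊, 1 / √(n:ℝ) := by rw [Finset.mul_sum]
    _ ≤ 2 * √x * (2 * √x) := by
        gcongr
        exact (sum_inv_sqrt _).trans (by gcongr)
    _ = 4 * x := by nlinarith [Real.sq_sqrt hx0.le]

end

section

open scoped ArithmeticFunction.vonMangoldt

lemma main_bound (χ : DirichletCharacter ℂ 18) (hχ : χ ≠ 1) :
    ∃ C : ℝ, 0 ≤ C ∧ ∀ x : ℝ, 1 ≤ x →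
      ‖∑ n ∈ Finset.Ioc 0 ⌊x⌋₊, fA χ n * (Real.log n : ℂ)‖ ≤ C * x := by
  obtain ⟨C1, h10, h1⟩ := sum_Ef χ
  obtain ⟨C2, h20, h2⟩ := sum_Ef (χ * th)
  obtain ⟨C3, h30, h3⟩ := lamN_sum
  refine ⟨C1 + C2 + 2 + 2 * C3, by positivity, fun x hx => ?_⟩
  have hN : (⌊x⌋₊ : ℝ) ≤ x := Nat.floor_le (by linarith)
  have hdl : dl χ = 0 := by unfold dl; rw [if_neg hχ]
  rw [sum_f_log]
  set N := ⌊x⌋₊ with hNdef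
  have e : ∀ m : ℕ, fA χ m * ∑ d ∈ Finset.Ioc 0 (N / m), fA χ d * (Λ d : ℂ) =
      fA χ m * (Ef χ (x / m) / 2) - fA χ m * (Ef (χ * th) (x / m) / 2)
      - dl (χ * th) / 2 * (fA χ m * ((x / m : ℝ) : ℂ))
      + fA χ m * ∑ d ∈ Finset.Ioc 0 (N / m), (fA χ d * (Λ d : ℂ) -
        (χ (d : ZMod 18) * (Λ d : ℂ) - (χ * th) (d : ZMod 18) * (Λ d : ℂ)) / 2) := by
    intro m
    have p1 : Psi χ (x / m) = ∑ d ∈ Finset.Ioc 0 (N / m), χ (d : ZMod 18) * (Λ d : ℂ) := by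
      rw [hNdef, ← Nat.floor_div_natCast]; rfl
    have p2 : Psi (χ * th) (x / m) =
        ∑ d ∈ Finset.Ioc 0 (N / m), (χ * th) (d : ZMod 18) * (Λ d : ℂ) := by
      rw [hNdef, ← Nat.floor_div_natCast]; rfl
    rw [Finset.sum_sub_distrib, ← Finset.sum_div, Finset.sum_sub_distrib, ← p1, ← p2]
    unfold Ef
    rw [hdl]
    ring
  rw [Finset.sum_congr rfl fun m _ => e m, Finset.sum_add_distrib, Finset.sum_sub_distrib,
    Finset.sum_sub_distrib, ← Finset.mul_sum]
  have bE : ∀ (η : DirichletCharacter ℂ 18) (C : ℝ),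
      ∑ n ∈ Finset.Icc 1 N, ‖Ef η (x / n)‖ ≤ C * x →
      ‖∑ m ∈ Finset.Ioc 0 N, fA χ m * (Ef η (x / m) / 2)‖ ≤ C * x := by
    intro η C h
    refine le_trans (norm_sum_le_of_le _ fun m _ => ?_) h
    rw [norm_mul, norm_div, Complex.norm_ofNat]
    have := fA_norm_le χ m
    nlinarith [norm_nonneg (Ef η (x / m)), norm_nonneg (fA χ m)]
  have b1 := bE χ C1 (h1 x hx)
  have b2 := bE (χ * th) C2 (h2 x hx)
  have b3 : ‖dl (χ * th) / 2 * ∑ m ∈ Finset.Ioc 0 N, fA χ m * ((x / m : ℝ) : ℂ)‖ ≤ 2 * x := by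
    by_cases h : χ * th = 1
    · have := sum_f_div χ h hx
      rw [norm_mul, norm_div, Complex.norm_ofNat]
      have h' := norm_dl_le (χ * th)
      calc _ ≤ 1 * (2 * x) := by gcongr; linarith
        _ = _ := by ring
    · have : dl (χ * th) = 0 := by unfold dl; rw [if_neg h]
      rw [this]; simp; linarith
  have b4 : ‖∑ m ∈ Finset.Ioc 0 N, fA χ m * ∑ d ∈ Finset.Ioc 0 (N / m), (fA χ d * (Λ d : ℂ) -
        (χ (d : ZMod 18) * (Λ d : ℂ) - (χ * th) (d : ZMod 18) * (Λ d : ℂ)) / 2)‖ ≤ 2 * C3 * x := by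
    calc _ ≤ ∑ m ∈ Finset.Ioc 0 N, 2 * ∑ d ∈ Finset.Ioc 0 (N / m), lamN d := by
          refine norm_sum_le_of_le _ fun m _ => ?_
          rw [norm_mul, Finset.mul_sum]
          refine (mul_le_of_le_one_left (norm_nonneg _) (fA_norm_le χ m)).trans ?_
          exact norm_sum_le_of_le _ fun d _ => gA_decomp χ d
      _ ≤ 2 * (C3 * N) := by
          rw [← Finset.mul_sum]; gcongr; exact h3 N
      _ ≤ 2 * (C3 * x) := by gcongr
      _ = _ := by ring
  refine (norm_add_le _ _).trans ?_
  refine (add_le_add ((norm_sub_le _ _).trans (add_le_add (norm_sub_le _ _) le_rfl)) le_rfl).trans ?_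
  linarith

end

/-- For a non-trivial Dirichlet character `χ` modulo 18, the sum of
`χ(n)` over positive integers `n ≤ x` all of whose prime factors are `≡ 2 (mod 3)`
is `O(x/log x)`. -/
theorem stmt_9 (χ : DirichletCharacter ℂ 18) (hχ : χ ≠ 1) :
    ∃ C : ℝ, 0 < C ∧ ∀ x : ℝ, 2 ≤ x →
      ‖∑ n ∈ (Finset.Icc 1 ⌊x⌋₊).filter (fun n => ∀ p ∈ n.primeFactors, p % 3 = 2),
          χ (n : ZMod 18)‖ ≤ C * x / Real.log x := by
  obtain ⟨C, hC0, hC⟩ := main_bound χ hχ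
  refine ⟨C + 4, by positivity, fun x hx => ?_⟩
  have hlog : 0 < Real.log x := Real.log_pos (by linarith)
  have h1 := hC x (by linarith)
  have h2 := sum_log_div χ (x := x) (by linarith)
  have e1 : ∑ n ∈ (Finset.Icc 1 ⌊x⌋₊).filter (fun n => ∀ p ∈ n.primeFactors, p % 3 = 2),
      χ (n : ZMod 18) = ∑ n ∈ Finset.Ioc 0 ⌊x⌋₊, fA χ n := by
    rw [Finset.sum_filter]; rfl
  rw [e1, le_div_iff₀ hlog]
  have e2 : (∑ n ∈ Finset.Ioc 0 ⌊x⌋₊, fA χ n) * (Real.log x : ℂ) =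
      ∑ n ∈ Finset.Ioc 0 ⌊x⌋₊, fA χ n * (Real.log n : ℂ) +
      ∑ n ∈ Finset.Ioc 0 ⌊x⌋₊, fA χ n * (Real.log (x / n) : ℂ) := by
    rw [← Finset.sum_add_distrib, Finset.sum_mul]
    refine Finset.sum_congr rfl fun n hn => ?_
    have hn0 : (n : ℝ) ≠ 0 := by
      have := (Finset.mem_Ioc.1 hn).1
      positivity
    rw [Real.log_div (by linarith) hn0]
    push_cast; ring
  have e3 : ‖∑ n ∈ Finset.Ioc 0 ⌊x⌋₊, fA χ n‖ * Real.log x =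
      ‖(∑ n ∈ Finset.Ioc 0 ⌊x⌋₊, fA χ n) * (Real.log x : ℂ)‖ := by
    rw [norm_mul, Complex.norm_real, Real.norm_of_nonneg hlog.le]
  rw [e3, e2]
  refine (norm_add_le _ _).trans ?_
  linarith
end

section
/- Let a₀ be a fixed nonzero integer. There exists a constant C > 0, depending only on a₀, such that for all real B ≥ 1, the number of triples (a₁,a₂,a₃) of positive integers, each at most B, for which there exist positive integers r₁,r₂,r₃ and b₁,b₂,b₃, squarefree positive integers u₁₂,u₁₃,u₂₃, and squarefree positive integers v_{ij} for all ordered pairs (i,j) with i ≠ j in {1,2,3}, satisfying: a₁ = r₁·b₁³·u₁₂·u₁₃·v₁₂·v₂₁²·v₁₃·v₃₁², a₂ = r₂·b₂³·u₁₂·u₂₃·v₂₁·v₁₂²·v₂₃·v₃₂², a₃ = r₃·b₃³·u₁₃·u₂₃·v₃₁·v₁₃²·v₃₂·v₂₃², and such that every prime dividing r₁, r₂ or r₃ either divides a₀ or is less than 17, is at most C·B^{3/2}. -/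
lemma aux_cover {ι α : Type*} (F : ι → ℝ) (hF : Summable F) (hF0 : ∀ i, 0 ≤ F i)
    (P : ι → α → Prop) (hP : ∀ i (T : Finset α), (∀ t ∈ T, P i t) → (T.card : ℝ) ≤ F i)
    (S : Finset α) (hS : ∀ t ∈ S, ∃ i, P i t) : (S.card : ℝ) ≤ ∑' i, F i := by
  classical
  rcases S.eq_empty_or_nonempty with rfl | ⟨t0, ht0⟩
  · simpa using tsum_nonneg hF0
  obtain ⟨i0, _⟩ := hS t0 ht0
  have : ∀ t, ∃ i, t ∈ S → P i t := by
    intro t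
    by_cases h : t ∈ S
    · obtain ⟨i, hi⟩ := hS t h
      exact ⟨i, fun _ => hi⟩
    · exact ⟨i0, fun h' => absurd h' h⟩
  choose f hf using this
  rw [Finset.card_eq_sum_card_image f S]
  push_cast
  refine le_trans (Finset.sum_le_sum (g := F) ?_) (hF.sum_le_tsum _ (fun i _ => hF0 i))
  intro i _
  apply hP
  intro t ht
  simp only [Finset.mem_filter] at ht
  rw [← ht.2]
  exact hf t ht.1

lemma aux_tail (a b c : ℝ) (ha : 0 < a) (hb : 0 < b) (hc : 0 < c) (T : Finset (ℕ × ℕ × ℕ))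
    (hT : ∀ t ∈ T, 0 < t.2.1 ∧ 0 < t.2.2 ∧ a < t.1 ∧
      (t.1 : ℝ) * t.2.1 ≤ a * b ∧ (t.1 : ℝ) * t.2.2 ≤ a * c) :
    (T.card : ℝ) ≤ 2 * (a * b * c) := by
  classical
  have hmaps : (T : Set (ℕ × ℕ × ℕ)).MapsTo Prod.fst (Finset.Ioo ⌊a⌋₊ (⌊a * b⌋₊ + 1)) := by
    intro t ht
    obtain ⟨h1, h2, h3, h4, h5⟩ := hT t ht
    simp only [Finset.coe_Ioo, Set.mem_Ioo]
    refine ⟨(Nat.floor_lt ha.le).2 h3, Nat.lt_succ_of_le (Nat.le_floor ?_)⟩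
    have : (1 : ℝ) ≤ t.2.1 := by exact_mod_cast h1
    have h0 : (0 : ℝ) ≤ t.1 := by positivity
    nlinarith
  rw [Finset.card_eq_sum_card_fiberwise hmaps]
  push_cast
  have key : ∀ x ∈ Finset.Ioo ⌊a⌋₊ (⌊a * b⌋₊ + 1),
      ((T.filter (fun t => t.1 = x)).card : ℝ) ≤ (a * b) * (a * c) * ((x : ℝ) ^ 2)⁻¹ := by
    intro x hx
    have hx0 : 0 < x := by
      have := (Finset.mem_Ioo.1 hx).1
      omega
    have hxr : (0 : ℝ) < x := by exact_mod_cast hx0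
    have hle : (T.filter (fun t => t.1 = x)).card ≤
        ((Finset.Icc 1 ⌊a * b / x⌋₊) ×ˢ (Finset.Icc 1 ⌊a * c / x⌋₊)).card := by
      apply Finset.card_le_card_of_injOn Prod.snd
      · intro t ht
        simp only [Finset.coe_filter, Set.mem_ofPred_eq] at ht
        obtain ⟨ht, rfl⟩ := ht
        obtain ⟨h1, h2, h3, h4, h5⟩ := hT t ht
        simp only [Finset.coe_product, Set.mem_prod, Finset.coe_Icc, Set.mem_Icc]
        refine ⟨⟨h1, Nat.le_floor ?_⟩, ⟨h2, Nat.le_floor ?_⟩⟩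
        · rw [le_div_iff₀ hxr]; linarith
        · rw [le_div_iff₀ hxr]; linarith
      · intro t ht s hs hts
        simp only [Finset.coe_filter, Set.mem_ofPred_eq] at ht hs
        exact Prod.ext (ht.2.trans hs.2.symm) hts
    rw [Finset.card_product, Nat.card_Icc, Nat.card_Icc, Nat.add_sub_cancel,
      Nat.add_sub_cancel] at hle
    have hle' : ((T.filter (fun t => t.1 = x)).card : ℝ) ≤
      (⌊a * b / x⌋₊ : ℝ) * ⌊a * c / x⌋₊ := by exact_mod_cast hle
    refine hle'.trans ?_
    calc (⌊a * b / x⌋₊ : ℝ) * ⌊a * c / x⌋₊ ≤ (a * b / x) * (a * c / x) := by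
          gcongr
          · exact Nat.floor_le (by positivity)
          · exact Nat.floor_le (by positivity)
      _ = _ := by field_simp
  refine (Finset.sum_le_sum key).trans ?_
  rw [← Finset.mul_sum]
  have h1 := sum_Ioo_inv_sq_le (α := ℝ) ⌊a⌋₊ (⌊a * b⌋₊ + 1)
  have h2 : (2 : ℝ) / (⌊a⌋₊ + 1) ≤ 2 / a := by
    gcongr
    exact (Nat.lt_floor_add_one a).le
  calc _ ≤ (a * b) * (a * c) * (2 / a) := by gcongr; exact h1.trans h2
    _ = _ := by field_simp

lemma aux_core (a b c : ℝ) (ha : 0 < a) (hb : 0 < b) (hc : 0 < c) (T : Finset (ℕ × ℕ × ℕ))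
    (hT : ∀ t ∈ T, 0 < t.1 ∧ 0 < t.2.1 ∧ 0 < t.2.2 ∧
      (t.1 : ℝ) * t.2.1 ≤ a * b ∧ (t.1 : ℝ) * t.2.2 ≤ a * c ∧ (t.2.1 : ℝ) * t.2.2 ≤ b * c) :
    (T.card : ℝ) ≤ 7 * (a * b * c) := by
  classical
  set T1 := T.filter (fun t => a < t.1)
  set T2 := T.filter (fun t => b < t.2.1)
  set T3 := T.filter (fun t => c < t.2.2)
  set T0 := T.filter (fun t => (t.1 : ℝ) ≤ a ∧ (t.2.1 : ℝ) ≤ b ∧ (t.2.2 : ℝ) ≤ c)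
  have hsub : T ⊆ T0 ∪ (T1 ∪ (T2 ∪ T3)) := by
    intro t ht
    simp only [T0, T1, T2, T3, Finset.mem_union, Finset.mem_filter, ht, true_and]
    by_contra! h
    obtain ⟨h0, h1, h2, h3⟩ := h
    exact absurd (h0 h1 h2) (not_lt.2 h3)
  have hcard : (T.card : ℝ) ≤ T0.card + (T1.card + (T2.card + T3.card)) := by
    have h1 := Finset.card_le_card hsub
    have h2 := Finset.card_union_le T0 (T1 ∪ (T2 ∪ T3))
    have h3 := Finset.card_union_le T1 (T2 ∪ T3)
    have h4 := Finset.card_union_le T2 T3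
    exact_mod_cast (by omega : T.card ≤ T0.card + (T1.card + (T2.card + T3.card)))
  have e0 : (T0.card : ℝ) ≤ a * b * c := by
    have hs : T0 ⊆ (Finset.Icc 1 ⌊a⌋₊) ×ˢ ((Finset.Icc 1 ⌊b⌋₊) ×ˢ (Finset.Icc 1 ⌊c⌋₊)) := by
      intro t ht
      simp only [T0, Finset.mem_filter] at ht
      obtain ⟨ht, h1, h2, h3⟩ := ht
      obtain ⟨p1, p2, p3, _⟩ := hT t ht
      simp only [Finset.mem_product, Finset.mem_Icc]
      exact ⟨⟨p1, Nat.le_floor h1⟩, ⟨p2, Nat.le_floor h2⟩, ⟨p3, Nat.le_floor h3⟩⟩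
    have hle := Finset.card_le_card hs
    simp only [Finset.card_product, Nat.card_Icc, Nat.add_sub_cancel] at hle
    have hle' : (T0.card : ℝ) ≤ (⌊a⌋₊ : ℝ) * (⌊b⌋₊ * ⌊c⌋₊) := by exact_mod_cast hle
    rw [mul_assoc]
    refine hle'.trans ?_
    gcongr
    · exact Nat.floor_le ha.le
    · exact Nat.floor_le hb.le
    · exact Nat.floor_le hc.le
  have e1 : (T1.card : ℝ) ≤ 2 * (a * b * c) := by
    apply aux_tail a b c ha hb hc
    intro t ht
    simp only [T1, Finset.mem_filter] at ht
    obtain ⟨p1, p2, p3, q1, q2, q3⟩ := hT t ht.1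
    exact ⟨p2, p3, ht.2, q1, q2⟩
  have e2 : (T2.card : ℝ) ≤ 2 * (b * a * c) := by
    have hinj : Function.Injective (fun t : ℕ × ℕ × ℕ => (t.2.1, t.1, t.2.2)) := by
      rintro ⟨x, y, z⟩ ⟨x', y', z'⟩ h
      simp only [Prod.mk.injEq] at h ⊢
      tauto
    rw [← Finset.card_image_of_injective T2 hinj]
    apply aux_tail b a c hb ha hc
    intro s hs
    obtain ⟨t, ht, rfl⟩ := Finset.mem_image.1 hs
    simp only [T2, Finset.mem_filter] at ht
    obtain ⟨p1, p2, p3, q1, q2, q3⟩ := hT t ht.1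
    exact ⟨p1, p3, ht.2, by simp only; linarith, q3⟩
  have e3 : (T3.card : ℝ) ≤ 2 * (c * a * b) := by
    have hinj : Function.Injective (fun t : ℕ × ℕ × ℕ => (t.2.2, t.1, t.2.1)) := by
      rintro ⟨x, y, z⟩ ⟨x', y', z'⟩ h
      simp only [Prod.mk.injEq] at h ⊢
      tauto
    rw [← Finset.card_image_of_injective T3 hinj]
    apply aux_tail c a b hc ha hb
    intro s hs
    obtain ⟨t, ht, rfl⟩ := Finset.mem_image.1 hs
    simp only [T3, Finset.mem_filter] at ht
    obtain ⟨p1, p2, p3, q1, q2, q3⟩ := hT t ht.1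
    exact ⟨p1, p2, ht.2, by simp only; linarith, by simp only; linarith⟩
  nlinarith

lemma aux_fiber (B : ℝ) (hB : 1 ≤ B) (D1 D2 D3 : ℕ) (T : Finset (ℕ × ℕ × ℕ))
    (hT : ∀ t ∈ T, ∃ x y z : ℕ, 0 < t.1 ∧ 0 < t.2.1 ∧ 0 < t.2.2 ∧
      (t.1 : ℝ) ≤ B ∧ (t.2.1 : ℝ) ≤ B ∧ (t.2.2 : ℝ) ≤ B ∧
      t.1 = D1 * (x * y) ∧ t.2.1 = D2 * (x * z) ∧ t.2.2 = D3 * (y * z)) :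
    (T.card : ℝ) ≤ 7 * B ^ ((3 : ℝ) / 2) * (√((D1 * D2 * D3 : ℕ) : ℝ))⁻¹ := by
  classical
  have hB0 : 0 < B := by linarith
  rcases T.eq_empty_or_nonempty with rfl | ⟨t0, ht0⟩
  · simp only [Finset.card_empty, Nat.cast_zero]; positivity
  have hD : 0 < D1 ∧ 0 < D2 ∧ 0 < D3 := by
    obtain ⟨x, y, z, p1, p2, p3, _, _, _, e1, e2, e3⟩ := hT t0 ht0
    rw [e1] at p1; rw [e2] at p2; rw [e3] at p3
    exact ⟨Nat.pos_of_mul_pos_right p1, Nat.pos_of_mul_pos_right p2, Nat.pos_of_mul_pos_right p3⟩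
  obtain ⟨hD1, hD2, hD3⟩ := hD
  have hT' : ∀ t, ∃ w : ℕ × ℕ × ℕ, t ∈ T → 0 < t.1 ∧ 0 < t.2.1 ∧ 0 < t.2.2 ∧
      (t.1 : ℝ) ≤ B ∧ (t.2.1 : ℝ) ≤ B ∧ (t.2.2 : ℝ) ≤ B ∧
      t.1 = D1 * (w.1 * w.2.1) ∧ t.2.1 = D2 * (w.1 * w.2.2) ∧ t.2.2 = D3 * (w.2.1 * w.2.2) := by
    intro t
    by_cases h : t ∈ T
    · obtain ⟨x, y, z, h⟩ := hT t h
      exact ⟨(x, y, z), fun _ => h⟩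
    · exact ⟨(0, 0, 0), fun h' => absurd h' h⟩
  choose g hg using hT'
  have hinj : Set.InjOn g T := by
    intro t ht s hs hts
    obtain ⟨_, _, _, _, _, _, e1, e2, e3⟩ := hg t ht
    obtain ⟨_, _, _, _, _, _, f1, f2, f3⟩ := hg s hs
    rw [hts] at e1 e2 e3
    exact Prod.ext (e1.trans f1.symm) (Prod.ext (e2.trans f2.symm) (e3.trans f3.symm))
  rw [← Finset.card_image_of_injOn hinj]
  set β := √B with hβ
  set d1 := √(D1 : ℝ) with hd1
  set d2 := √(D2 : ℝ) with hd2
  set d3 := √(D3 : ℝ) with hd3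
  have pD1 : (0 : ℝ) < D1 := by exact_mod_cast hD1
  have pD2 : (0 : ℝ) < D2 := by exact_mod_cast hD2
  have pD3 : (0 : ℝ) < D3 := by exact_mod_cast hD3
  have pβ : 0 < β := Real.sqrt_pos.2 hB0
  have p1 : 0 < d1 := Real.sqrt_pos.2 pD1
  have p2 : 0 < d2 := Real.sqrt_pos.2 pD2
  have p3 : 0 < d3 := Real.sqrt_pos.2 pD3
  have sβ : β ^ 2 = B := Real.sq_sqrt hB0.le
  have s1 : d1 ^ 2 = D1 := Real.sq_sqrt pD1.le
  have s2 : d2 ^ 2 = D2 := Real.sq_sqrt pD2.le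
  have s3 : d3 ^ 2 = D3 := Real.sq_sqrt pD3.le
  have hB32 : B ^ ((3 : ℝ) / 2) = β ^ 3 := by
    rw [hβ, Real.sqrt_eq_rpow, ← Real.rpow_natCast, ← Real.rpow_mul hB0.le]
    norm_num
  have hsq : √((D1 * D2 * D3 : ℕ) : ℝ) = d1 * d2 * d3 := by
    push_cast
    rw [Real.sqrt_mul (by positivity), Real.sqrt_mul (by positivity)]
  have hm := aux_core (β * d3 / (d1 * d2)) (β * d2 / (d1 * d3)) (β * d1 / (d2 * d3))
    (by positivity) (by positivity) (by positivity) (T.image g) ?_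
  · refine hm.trans (le_of_eq ?_)
    rw [hB32, hsq]
    field_simp
  · intro w hw
    obtain ⟨t, ht, rfl⟩ := Finset.mem_image.1 hw
    obtain ⟨q1, q2, q3, l1, l2, l3, e1, e2, e3⟩ := hg t ht
    have E1 : β * d3 / (d1 * d2) * (β * d2 / (d1 * d3)) = B / D1 := by
      rw [← sβ, ← s1]; field_simp
    have E2 : β * d3 / (d1 * d2) * (β * d1 / (d2 * d3)) = B / D2 := by
      rw [← sβ, ← s2]; field_simp
    have E3 : β * d2 / (d1 * d3) * (β * d1 / (d2 * d3)) = B / D3 := by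
      rw [← sβ, ← s3]; field_simp
    rw [E1, E2, E3, le_div_iff₀ pD1, le_div_iff₀ pD2, le_div_iff₀ pD3]
    rw [e1] at q1 l1; rw [e2] at q2 l2; rw [e3] at q3 l3
    push_cast at l1 l2 l3
    have r1 := Nat.pos_of_mul_pos_left q1
    have r2 := Nat.pos_of_mul_pos_left q2
    refine ⟨Nat.pos_of_mul_pos_right r1, Nat.pos_of_mul_pos_left r1,
      Nat.pos_of_mul_pos_left r2, by linarith, by linarith, by linarith⟩

/-- `n ↦ 1/√n` as a multiplicative map. -/
noncomputable def invSqrtHom : ℕ →*₀ ℝ where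
  toFun n := (√(n : ℝ))⁻¹
  map_zero' := by simp
  map_one' := by simp
  map_mul' m n := by
    push_cast
    rw [Real.sqrt_mul (by positivity), mul_inv]

lemma aux_sum_r (s : Finset ℕ) :
    Summable (fun r : Nat.factoredNumbers s => (√((r : ℕ) : ℝ))⁻¹) := by
  have h := (EulerProduct.summable_and_hasSum_factoredNumbers_prod_filter_prime_geometric
    (f := (invSqrtHom : ℕ →* ℝ)) ?_ s).1
  · refine h.congr ?_
    intro r
    simp [invSqrtHom]
  · intro p hp
    have : (1 : ℝ) < √(p : ℝ) := by
      rw [Real.lt_sqrt (by norm_num)]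
      have := hp.one_lt
      norm_num
      exact this
    change ‖(√(p : ℝ))⁻¹‖ < 1
    rw [Real.norm_of_nonneg (by positivity)]
    exact inv_lt_one_of_one_lt₀ this

lemma aux_sum_n : Summable (fun n : ℕ => ((√(n : ℝ)) ^ 3)⁻¹) := by
  have h := (Real.summable_nat_rpow_inv (p := (3 : ℝ) / 2)).2 (by norm_num)
  refine h.congr ?_
  intro n
  rw [Real.sqrt_eq_rpow, ← Real.rpow_natCast, ← Real.rpow_mul (by positivity)]
  norm_num

lemma aux_sum_prod {α β : Type*} {f : α → ℝ} {g : β → ℝ}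
    (hf : Summable f ∧ ∀ a, 0 ≤ f a) (hg : Summable g ∧ ∀ b, 0 ≤ g b) :
    Summable (fun x : α × β => f x.1 * g x.2) ∧ ∀ x : α × β, 0 ≤ f x.1 * g x.2 :=
  ⟨hf.1.mul_of_nonneg hg.1 hf.2 hg.2, fun x => mul_nonneg (hf.2 _) (hg.2 _)⟩

/-- For a fixed nonzero integer `a₀`, the number of triples
`(a₁,a₂,a₃)` of positive integers at most `B` admitting the factorization from the
proof of Theorem 1.3 (primes dividing `r₁r₂r₃` divide `a₀` or are less than 17,
`u`'s and `v`'s squarefree) is at most `C·B^{3/2}`. -/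
theorem stmt_12 (a₀ : ℤ) (h₀ : a₀ ≠ 0) :
    ∃ C : ℝ, 0 < C ∧ ∀ B : ℝ, 1 ≤ B →
      (({t : ℕ × ℕ × ℕ |
          0 < t.1 ∧ 0 < t.2.1 ∧ 0 < t.2.2 ∧
          (t.1 : ℝ) ≤ B ∧ (t.2.1 : ℝ) ≤ B ∧ (t.2.2 : ℝ) ≤ B ∧
          ∃ r₁ r₂ r₃ b₁ b₂ b₃ u12 u13 u23 v12 v21 v13 v31 v23 v32 : ℕ,
            0 < r₁ ∧ 0 < r₂ ∧ 0 < r₃ ∧ 0 < b₁ ∧ 0 < b₂ ∧ 0 < b₃ ∧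
            Squarefree u12 ∧ Squarefree u13 ∧ Squarefree u23 ∧
            Squarefree v12 ∧ Squarefree v21 ∧ Squarefree v13 ∧
            Squarefree v31 ∧ Squarefree v23 ∧ Squarefree v32 ∧
            t.1 = r₁ * b₁ ^ 3 * u12 * u13 * v12 * v21 ^ 2 * v13 * v31 ^ 2 ∧
            t.2.1 = r₂ * b₂ ^ 3 * u12 * u23 * v21 * v12 ^ 2 * v23 * v32 ^ 2 ∧
            t.2.2 = r₃ * b₃ ^ 3 * u13 * u23 * v31 * v13 ^ 2 * v32 * v23 ^ 2 ∧
            (∀ p : ℕ, p.Prime → (p ∣ r₁ ∨ p ∣ r₂ ∨ p ∣ r₃) →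
              ((p : ℤ) ∣ a₀ ∨ p < 17))}.ncard : ℝ)) ≤
        C * B ^ ((3 : ℝ) / 2) := by
  classical
  set s : Finset ℕ := a₀.natAbs.primeFactors ∪ Finset.range 17 with hs
  have R : Summable (fun r : Nat.factoredNumbers s => (√((r : ℕ) : ℝ))⁻¹) ∧
      ∀ r : Nat.factoredNumbers s, 0 ≤ (√((r : ℕ) : ℝ))⁻¹ :=
    ⟨aux_sum_r s, fun r => by positivity⟩
  have N : Summable (fun n : ℕ => ((√(n : ℝ)) ^ 3)⁻¹) ∧ ∀ n : ℕ, 0 ≤ ((√(n : ℝ)) ^ 3)⁻¹ :=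
    ⟨aux_sum_n, fun n => by positivity⟩
  have N3 := aux_sum_prod N (aux_sum_prod N N)
  have R3 := aux_sum_prod R (aux_sum_prod R R)
  obtain ⟨hG, hG0⟩ := aux_sum_prod R3 (aux_sum_prod N3 (aux_sum_prod N3 N3))
  set G := fun x : (Nat.factoredNumbers s × Nat.factoredNumbers s × Nat.factoredNumbers s) ×
    (ℕ × ℕ × ℕ) × (ℕ × ℕ × ℕ) × (ℕ × ℕ × ℕ) => _ with hGdef
  refine ⟨7 * (∑' i, G i) + 1, by have : 0 ≤ ∑' i, G i := tsum_nonneg hG0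
                                  positivity, ?_⟩
  intro B hB
  have hB0 : 0 < B := by linarith
  set S := {t : ℕ × ℕ × ℕ | _} with hS
  have hfin : S.Finite := by
    apply Set.Finite.subset ((Finset.range (⌊B⌋₊ + 1) ×ˢ (Finset.range (⌊B⌋₊ + 1) ×ˢ
      Finset.range (⌊B⌋₊ + 1)) : Finset (ℕ × ℕ × ℕ)).finite_toSet)
    rintro t ⟨_, _, _, h1, h2, h3, _⟩
    simp only [Finset.coe_product, Set.mem_prod, Finset.coe_range, Set.mem_Iio,
      Nat.lt_succ_iff]
    exact ⟨Nat.le_floor h1, Nat.le_floor h2, Nat.le_floor h3⟩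
  rw [Set.ncard_eq_toFinset_card S hfin]
  have hpow : 0 < B ^ ((3 : ℝ) / 2) := by positivity
  have hmain := aux_cover (fun i => 7 * B ^ ((3 : ℝ) / 2) * G i) (hG.mul_left _)
    (fun i => by have := hG0 i; positivity)
    (fun i t => ∃ x y z : ℕ, 0 < t.1 ∧ 0 < t.2.1 ∧ 0 < t.2.2 ∧
      (t.1 : ℝ) ≤ B ∧ (t.2.1 : ℝ) ≤ B ∧ (t.2.2 : ℝ) ≤ B ∧
      t.1 = ((i.1.1 : ℕ) * i.2.1.1 ^ 3 * i.2.2.1.1 * i.2.2.1.2.1 ^ 2 * i.2.2.1.2.2 *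
        i.2.2.2.1 ^ 2) * (x * y) ∧
      t.2.1 = ((i.1.2.1 : ℕ) * i.2.1.2.1 ^ 3 * i.2.2.1.2.1 * i.2.2.1.1 ^ 2 * i.2.2.2.2.1 *
        i.2.2.2.2.2 ^ 2) * (x * z) ∧
      t.2.2 = ((i.1.2.2 : ℕ) * i.2.1.2.2 ^ 3 * i.2.2.2.1 * i.2.2.1.2.2 ^ 2 * i.2.2.2.2.2 *
        i.2.2.2.2.1 ^ 2) * (y * z)) ?_ hfin.toFinset ?_
  · rw [tsum_mul_left] at hmain
    refine hmain.trans ?_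
    nlinarith
  · rintro ⟨⟨r1, r2, r3⟩, ⟨b1, b2, b3⟩, ⟨v12, v21, v13⟩, ⟨v31, v23, v32⟩⟩ T hT
    refine (aux_fiber B hB _ _ _ T hT).trans (le_of_eq ?_)
    congr 1
    have : (((r1 : ℕ) * b1 ^ 3 * v12 * v21 ^ 2 * v13 * v31 ^ 2) *
        ((r2 : ℕ) * b2 ^ 3 * v21 * v12 ^ 2 * v23 * v32 ^ 2) *
        ((r3 : ℕ) * b3 ^ 3 * v31 * v13 ^ 2 * v32 * v23 ^ 2) : ℕ) =
        ((r1 : ℕ) * ((r2 : ℕ) * (r3 : ℕ))) * ((b1 ^ 3 * (b2 ^ 3 * b3 ^ 3)) *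
        ((v12 ^ 3 * (v21 ^ 3 * v13 ^ 3)) * (v31 ^ 3 * (v23 ^ 3 * v32 ^ 3)))) := by ring
    simp only [hGdef]
    rw [this]
    have hmul : ∀ m n : ℕ, (√((m * n : ℕ) : ℝ))⁻¹ = (√(m : ℝ))⁻¹ * (√(n : ℝ))⁻¹ :=
      fun m n => map_mul invSqrtHom m n
    have hpw : ∀ n : ℕ, (√((n ^ 3 : ℕ) : ℝ))⁻¹ = ((√(n : ℝ)) ^ 3)⁻¹ := by
      intro n
      rw [← inv_pow]
      exact map_pow invSqrtHom n 3
    simp only [hmul, hpw]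
  · intro t ht
    rw [Set.Finite.mem_toFinset] at ht
    obtain ⟨p1, p2, p3, l1, l2, l3, r₁, r₂, r₃, b₁, b₂, b₃, u12, u13, u23, v12, v21, v13, v31,
      v23, v32, hr1, hr2, hr3, _, _, _, _, _, _, _, _, _, _, _, _, e1, e2, e3, hp⟩ := ht
    have hmem : ∀ r : ℕ, 0 < r → (∀ p : ℕ, p.Prime → p ∣ r → (p ∣ r₁ ∨ p ∣ r₂ ∨ p ∣ r₃)) →
        r ∈ Nat.factoredNumbers s := by
      intro r hr h
      rw [Nat.mem_factoredNumbers_iff_forall_le]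
      refine ⟨hr.ne', fun p _ hpp hpr => ?_⟩
      rw [hs, Finset.mem_union, Finset.mem_range, Nat.mem_primeFactors]
      rcases hp p hpp (h p hpp hpr) with h | h
      · exact Or.inl ⟨hpp, Int.natCast_dvd.1 h, Int.natAbs_ne_zero.2 h₀⟩
      · exact Or.inr h
    refine ⟨⟨⟨⟨r₁, hmem r₁ hr1 fun p _ h => Or.inl h⟩,
      ⟨r₂, hmem r₂ hr2 fun p _ h => Or.inr (Or.inl h)⟩,
      ⟨r₃, hmem r₃ hr3 fun p _ h => Or.inr (Or.inr h)⟩⟩, ⟨b₁, b₂, b₃⟩, ⟨v12, v21, v13⟩,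
      ⟨v31, v23, v32⟩⟩, u12, u13, u23, p1, p2, p3, l1, l2, l3, ?_, ?_, ?_⟩
    · rw [e1]; ring
    · rw [e2]; ring
    · rw [e3]; ring
end

section
/- Let q be a prime number with q ≡ 8 (mod 9). Let K = ℚ(β) be the cubic field obtained by adjoining to ℚ a root β of X³ − 4/5 (equivalently, K = ℚ(∛10)). Then there exists an element ε of the ring of integers of K with Norm_{K/ℚ}(ε) = −5q. -/
lemma coe_num2 {K : Type*} [Field K] [NumberField K] :
    algebraMap (NumberField.RingOfIntegers K) K 2 = 2 :=
  map_ofNat _ 2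

lemma coe_num3 {K : Type*} [Field K] [NumberField K] :
    algebraMap (NumberField.RingOfIntegers K) K 3 = 3 :=
  map_ofNat _ 3

lemma coe_num5 {K : Type*} [Field K] [NumberField K] :
    algebraMap (NumberField.RingOfIntegers K) K 5 = 5 :=
  map_ofNat _ 5

lemma coe_num10 {K : Type*} [Field K] [NumberField K] :
    algebraMap (NumberField.RingOfIntegers K) K 10 = 10 :=
  map_ofNat _ 10

open Polynomial in
lemma cub_lin {K : Type*} [Field K] [NumberField K] (θ : K) (h : θ ^ 3 = 10) :
    LinearIndependent ℚ ![(1 : K), θ, θ ^ 2] := by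
  have hcube : ∀ b : ℚ, b ^ 3 ≠ 10 := by
    intro b hb
    have hint : IsIntegral ℤ b := by
      refine ⟨X ^ 3 - C 10, monic_X_pow_sub_C _ (by norm_num), ?_⟩
      simp [hb]
    obtain ⟨n, hn⟩ := IsIntegrallyClosed.isIntegral_iff.mp hint
    have hn' : (n : ℚ) = b := by simpa using hn
    rw [← hn'] at hb
    have hb' : n ^ 3 = 10 := by exact_mod_cast hb
    have h1 : n < 3 := by
      by_contra hh
      push Not at hh
      nlinarith [sq_nonneg n, mul_self_nonneg (n - 3)]
    have h2 : 2 < n := by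
      by_contra hh
      push Not at hh
      nlinarith [sq_nonneg n, sq_nonneg (n + 1)]
    omega
  have hirr : Irreducible (X ^ 3 - C (10 : ℚ)) :=
    X_pow_sub_C_irreducible_of_prime Nat.prime_three hcube
  have hmin : minpoly ℚ θ = X ^ 3 - C (10 : ℚ) := by
    symm
    apply minpoly.eq_of_irreducible_of_monic hirr
    · simp [h]
    · exact monic_X_pow_sub_C _ (by norm_num)
  have hdeg : (minpoly ℚ θ).natDegree = 3 := by
    rw [hmin]; exact natDegree_X_pow_sub_C
  have := linearIndependent_pow (K := ℚ) θ
  have h2 := this.comp (Fin.cast hdeg.symm) (Fin.cast_injective _)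
  have h3 : ![(1 : K), θ, θ ^ 2] = (fun i : Fin _ => θ ^ (i : ℕ)) ∘ Fin.cast hdeg.symm := by
    ext i
    fin_cases i <;> simp
  rw [h3]
  exact h2

lemma cub_norm_trace {K : Type*} [Field K] [NumberField K] (θ : K) (h : θ ^ 3 = 10)
    (hrank : Module.finrank ℚ K = 3) (x y z : ℚ) :
    Algebra.norm ℚ ((x : K) + y * θ + z * θ ^ 2) =
        x ^ 3 + 10 * y ^ 3 + 100 * z ^ 3 - 30 * x * y * z ∧
      Algebra.trace ℚ K ((x : K) + y * θ + z * θ ^ 2) = 3 * x := by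
  let b : Module.Basis (Fin 3) ℚ K :=
    basisOfLinearIndependentOfCardEqFinrank (cub_lin θ h) (by simp [hrank])
  have hb : ⇑b = ![(1 : K), θ, θ ^ 2] := coe_basisOfLinearIndependentOfCardEqFinrank _ _
  have hrep : ∀ (u : K) (v : Fin 3 → ℚ), u = (v 0 : K) + v 1 * θ + v 2 * θ ^ 2 →
      ⇑(b.repr u) = v := by
    intro u v hu
    have : u = ∑ i, v i • b i := by
      rw [hu, Fin.sum_univ_three, hb]
      simp [Algebra.smul_def]
    rw [this, b.repr_sum_self]
  have hmat : Algebra.leftMulMatrix b ((x : K) + y * θ + z * θ ^ 2) =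
      !![x, 10 * z, 10 * y; y, x, 10 * z; z, y, x] := by
    ext i j
    rw [Algebra.leftMulMatrix_eq_repr_mul]
    fin_cases j
    · rw [hrep _ ![x, y, z] (by simp [hb])]
      fin_cases i <;> rfl
    · rw [hrep _ ![10 * z, x, y] (by simp [hb]; linear_combination (z : K) * h)]
      fin_cases i <;> rfl
    · rw [hrep _ ![10 * y, 10 * z, x] (by
        simp [hb]; linear_combination ((y : K) + z * θ) * h)]
      fin_cases i <;> rfl
  rw [Algebra.norm_eq_matrix_det b, Algebra.trace_eq_matrix_trace b, hmat]
  constructor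
  · rw [Matrix.det_fin_three]; simp; ring
  · rw [Matrix.trace_fin_three]; simp; ring

lemma ring_int_norm {K : Type*} [Field K] [NumberField K] (θ : K) (h : θ ^ 3 = 10)
    (hrank : Module.finrank ℚ K = 3) (u : NumberField.RingOfIntegers K) (x y z : ℚ) (n : ℤ)
    (hu : (u : K) = (x : K) + y * θ + z * θ ^ 2)
    (hn : x ^ 3 + 10 * y ^ 3 + 100 * z ^ 3 - 30 * x * y * z = n) :
    Algebra.norm ℤ u = n := by
  have := Algebra.coe_norm_int u
  rw [hu, (cub_norm_trace θ h hrank x y z).1, hn] at this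
  exact_mod_cast this

lemma ring_int_trace {K : Type*} [Field K] [NumberField K] (θ : K) (h : θ ^ 3 = 10)
    (hrank : Module.finrank ℚ K = 3) (u : NumberField.RingOfIntegers K) (x y z : ℚ) (n : ℤ)
    (hu : (u : K) = (x : K) + y * θ + z * θ ^ 2)
    (hn : 3 * x = n) :
    Algebra.trace ℤ _ u = n := by
  have := Algebra.coe_trace_int u
  rw [hu, (cub_norm_trace θ h hrank x y z).2, hn] at this
  exact_mod_cast this

lemma cub_discr {K : Type*} [Field K] [NumberField K] (hrank : Module.finrank ℚ K = 3)
    (t w : NumberField.RingOfIntegers K) (h : (t : K) ^ 3 = 10)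
    (hw : 3 * (w : K) = 1 + t + t ^ 2) : |NumberField.discr K| ≤ 300 := by
  have hw' : (w : K) = (1 + t + t ^ 2) / 3 := by rw [← hw]; simp
  have hT := ring_int_trace (t : K) h hrank
  let c : Fin 3 → NumberField.RingOfIntegers K := ![1, t, w]
  have hc : Algebra.discr ℤ c = -300 := by
    have hm : Algebra.traceMatrix ℤ c = !![3, 0, 1; 0, 0, 10; 1, 10, 7] := by
      ext i j
      rw [Algebra.traceMatrix_apply, Algebra.traceForm_apply]
      fin_cases i <;> fin_cases j
      · exact hT _ 1 0 0 3 (by simp [c]) (by norm_num)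
      · exact hT _ 0 1 0 0 (by simp [c]) (by norm_num)
      · exact hT _ (1/3) (1/3) (1/3) 1 (by simp [c, hw']; ring) (by norm_num)
      · exact hT _ 0 1 0 0 (by simp [c]) (by norm_num)
      · exact hT _ 0 0 1 0 (by simp [c]; ring) (by norm_num)
      · exact hT _ (10/3) (1/3) (1/3) 10
          (by simp [c, hw']; linear_combination (1/3 : K) * h) (by norm_num)
      · exact hT _ (1/3) (1/3) (1/3) 1 (by simp [c, hw']; ring) (by norm_num)
      · exact hT _ (10/3) (1/3) (1/3) 10
          (by simp [c, hw']; linear_combination (1/3 : K) * h) (by norm_num)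
      · exact hT _ (21/9) (12/9) (3/9) 7
          (by simp [c, hw']; linear_combination (1/9 : K) * (2 + t) * h) (by norm_num)
    rw [Algebra.discr_def, hm, Matrix.det_fin_three]; simp
  have hcard : Module.finrank ℤ (NumberField.RingOfIntegers K) = 3 := by
    rw [NumberField.RingOfIntegers.rank, hrank]
  let B : Module.Basis (Fin 3) ℤ (NumberField.RingOfIntegers K) :=
    Module.finBasisOfFinrankEq _ _ hcard
  have h1 := Algebra.discr_of_matrix_vecMul (A := ℤ) B (B.toMatrix c)
  rw [B.toMatrix_map_vecMul, hc, NumberField.discr_eq_discr] at h1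
  have h2 : NumberField.discr K ∣ -300 := ⟨(B.toMatrix c).det ^ 2, by rw [h1]; ring⟩
  exact Int.le_of_dvd (by norm_num) (by rw [abs_dvd]; simpa using h2)

open NumberField in
lemma cub_pid {K : Type*} [Field K] [NumberField K] (hrank : Module.finrank ℚ K = 3)
    (t w : 𝓞 K) (h : (t : K) ^ 3 = 10)
    (hw : 3 * (w : K) = 1 + t + t ^ 2) : IsPrincipalIdealRing (𝓞 K) := by
  have hw' : (w : K) = (1 + t + t ^ 2) / 3 := by rw [← hw]; simp
  have hN := ring_int_norm (t : K) h hrank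
  have hd := cub_discr hrank t w h hw
  have hO : t ^ 3 = 10 := by
    apply RingOfIntegers.ext
    change algebraMap (𝓞 K) K (t ^ 3) = algebraMap (𝓞 K) K 10
    rw [map_pow, coe_num10]
    exact h
  have hwO : w ^ 3 = w ^ 2 + 3 * w + 3 := by
    apply RingOfIntegers.ext
    simp [hw', coe_num2, coe_num3, coe_num5]
    linear_combination (1/27 : K) * (t ^ 3 + 3 * t ^ 2 + 3 * t + 11) * h
  have hgO : w - 1 = -((2 - t) * (3 + t + 2 * w)) := by
    apply RingOfIntegers.ext
    simp [hw', coe_num2, coe_num3, coe_num5]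
    linear_combination (-2/3 : K) * h
  have n1 : Algebra.norm ℤ (2 - t) = -2 :=
    hN _ 2 (-1) 0 _ (by simp [coe_num2]; ring) (by norm_num)
  have n2 : Algebra.norm ℤ w = 3 :=
    hN _ (1/3) (1/3) (1/3) _ (by simp [hw', coe_num2, coe_num3, coe_num5]; ring) (by norm_num)
  have n3 : Algebra.norm ℤ (3 + t + 2 * w) = 3 :=
    hN _ (11/3) (5/3) (2/3) _ (by simp [hw', coe_num2, coe_num3, coe_num5]; ring) (by norm_num)
  apply RingOfIntegers.isPrincipalIdealRing_of_isPrincipal_of_norm_le_of_isPrime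
  rintro ⟨P, hP0⟩ hP hle
  simp only at hP hle ⊢
  have key : ∀ g : 𝓞 K, (Algebra.norm ℤ g).natAbs.Prime → g ∈ P →
      Submodule.IsPrincipal P := by
    intro g hg hgP
    rw [← Ideal.absNorm_span_singleton] at hg
    have hpr : (Ideal.span {g}).IsPrime := Ideal.isPrime_of_irreducible_absNorm hg
    have hne : Ideal.span {g} ≠ ⊥ := by
      intro hbot; rw [hbot] at hg; simp at hg; exact Nat.not_prime_zero hg
    have hmax : (Ideal.span {g}).IsMaximal := hpr.isMaximal hne
    have := hmax.eq_of_le hP.ne_top ((Ideal.span_singleton_le_iff_mem _).mpr hgP)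
    exact ⟨g, this.symm⟩
  have hr2 : InfinitePlace.nrComplexPlaces K ≤ 1 := by
    have := InfinitePlace.card_add_two_mul_card_eq_rank K
    omega
  have hlt : Ideal.absNorm P < 5 := by
    have hs : √|(discr K : ℝ)| ≤ 17.33 := by
      apply Real.sqrt_le_iff.mpr
      refine ⟨by norm_num, ?_⟩
      have : ((|discr K| : ℤ) : ℝ) ≤ 300 := by exact_mod_cast hd
      push_cast at this
      norm_num; linarith
    have hp : (4 / Real.pi) ^ InfinitePlace.nrComplexPlaces K ≤ 1.2740 := by
      have h4 : 4 / Real.pi ≤ 1.2740 := by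
        rw [div_le_iff₀ Real.pi_pos]
        linarith [Real.pi_gt_d4]
      have h5 : 1 ≤ 4 / Real.pi := by
        rw [le_div_iff₀ Real.pi_pos]; linarith [Real.pi_le_four]
      calc _ ≤ (4 / Real.pi) ^ 1 := pow_le_pow_right₀ h5 hr2
        _ ≤ _ := by simpa using h4
    have : (Ideal.absNorm P : ℝ) < 5 := by
      refine hle.trans_lt ?_
      rw [hrank]
      have hf : ((Nat.factorial 3 : ℕ) : ℝ) = 6 := by norm_num [Nat.factorial]
      rw [hf]
      calc _ ≤ 1.2740 * (6 / ((3 : ℕ) : ℝ) ^ 3 * 17.33) := by gcongr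
        _ < 5 := by norm_num
    exact_mod_cast this
  have hmem := Ideal.absNorm_mem P
  have hne1 : (1 : 𝓞 K) ∉ P := (Ideal.ne_top_iff_one P).mp hP.ne_top
  have htwo : (2 : 𝓞 K) ∈ P → Submodule.IsPrincipal P := by
    intro h2
    have ht : t ∈ P := by
      apply hP.mem_of_pow_mem 3
      rw [hO]
      have := P.mul_mem_left 5 h2
      norm_num at this; exact this
    exact key (2 - t) (by rw [n1]; norm_num) (P.sub_mem h2 ht)
  have hnz : Ideal.absNorm P ≠ 0 := Ideal.absNorm_ne_zero_iff_mem_nonZeroDivisors.mpr hP0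
  generalize Ideal.absNorm P = m at hmem hlt hnz
  interval_cases m
  · exact absurd rfl hnz
  · exact absurd (by simpa using hmem) hne1
  · exact htwo (by simpa using hmem)
  · have h3 : (3 : 𝓞 K) ∈ P := by simpa using hmem
    have hprod : w ^ 2 * (w - 1) ∈ P := by
      have : w ^ 2 * (w - 1) = (w + 1) * 3 := by linear_combination hwO
      rw [this]; exact P.mul_mem_left _ h3
    rcases hP.mem_or_mem hprod with hh | hh
    · exact key w (by rw [n2]; norm_num) (hP.mem_of_pow_mem 2 hh)
    · rw [hgO] at hh
      rcases hP.mem_or_mem (neg_mem_iff.mp hh) with hh | hh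
      · exact key _ (by rw [n1]; norm_num) hh
      · exact key _ (by rw [n3]; norm_num) hh
  · apply htwo
    apply hP.mem_of_pow_mem 2
    norm_num; simpa using hmem

lemma cube_root_mod (q : ℕ) (hq : q.Prime) (hq9 : q % 9 = 8) :
    ∃ s : ℤ, (q : ℤ) ∣ 10 - s ^ 3 ∧ ¬ (q : ℤ) ∣ 3 * s ^ 2 ∧ ¬ ((q : ℤ) ^ 2 ∣ 10 - s ^ 3) := by
  have hp : Prime (q : ℤ) := Nat.prime_iff_prime_int.mp hq
  have hsmall : ∀ m : ℕ, m ∣ 30 → 1 < m → ¬ (q : ℤ) ∣ 10 ∧ ¬ (q : ℤ) ∣ 3 := by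
    intro m _ _
    constructor
    · intro hd
      have hd' : q ∣ 10 := by exact_mod_cast hd
      have := Nat.le_of_dvd (by norm_num) hd'
      interval_cases q <;> omega
    · intro hd
      have hd' : q ∣ 3 := by exact_mod_cast hd
      have := Nat.le_of_dvd (by norm_num) hd'
      interval_cases q <;> omega
  obtain ⟨h10, h3⟩ := hsmall 2 (by norm_num) (by norm_num)
  have hex : ∃ s : ℤ, (q : ℤ) ∣ 10 - s ^ 3 := by
    have : Fact q.Prime := ⟨hq⟩
    let k := (2 * q - 1) / 3
    have hk : k * 3 = 2 * (q - 1) + 1 := by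
      have := hq.one_lt; simp only [k]; omega
    have hz : (10 : ZMod q) ≠ 0 := by
      intro h0
      apply h10
      rw [← ZMod.intCast_zmod_eq_zero_iff_dvd] 
      simpa using h0
    refine ⟨10 ^ k, ?_⟩
    rw [← ZMod.intCast_zmod_eq_zero_iff_dvd]
    push_cast
    rw [← pow_mul, hk, pow_succ, mul_comm 2, pow_mul, ZMod.pow_card_sub_one_eq_one hz]
    ring
  obtain ⟨s, hs⟩ := hex
  have hder : ∀ s : ℤ, (q : ℤ) ∣ 10 - s ^ 3 → ¬ (q : ℤ) ∣ 3 * s ^ 2 := by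
    intro s hs hd
    rcases hp.dvd_or_dvd hd with hd | hd
    · exact h3 hd
    · have := hp.dvd_of_dvd_pow hd
      apply h10
      have h1 : (q : ℤ) ∣ s ^ 3 := this.trans (dvd_pow_self s (by norm_num))
      simpa using dvd_add hs h1
  by_cases hsq : (q : ℤ) ^ 2 ∣ 10 - s ^ 3
  · have hs2 : (q : ℤ) ∣ 10 - (s + q) ^ 3 := by
      have : 10 - (s + q) ^ 3 = (10 - s ^ 3) + q * (-(3 * s ^ 2 + 3 * s * q + q ^ 2)) := by ring
      rw [this]; exact dvd_add hs (dvd_mul_right _ _)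
    refine ⟨s + q, hs2, hder _ hs2, ?_⟩
    intro hbad
    apply hder s hs
    have h1 := dvd_sub hsq hbad
    have h2 : (q : ℤ) ^ 2 ∣ (q : ℤ) ^ 2 * (3 * s + q) := dvd_mul_right _ _
    have h4 := dvd_sub h1 h2
    have h5 : 10 - s ^ 3 - (10 - (s + q) ^ 3) - (q : ℤ) ^ 2 * (3 * s + q) = q * (3 * s ^ 2) := by
      ring
    rw [h5, pow_two] at h4
    exact (mul_dvd_mul_iff_left hp.ne_zero).mp h4
  · exact ⟨s, hs, hder s hs, hsq⟩

open NumberField in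
lemma cub_exists_q {K : Type*} [Field K] [NumberField K] (hrank : Module.finrank ℚ K = 3)
    (t w : 𝓞 K) (h : (t : K) ^ 3 = 10)
    (hw : 3 * (w : K) = 1 + t + t ^ 2) (q : ℕ) (hq : q.Prime) (hq9 : q % 9 = 8) :
    ∃ g : 𝓞 K, (Algebra.norm ℤ g).natAbs = q := by
  have := cub_pid hrank t w h hw
  have hO : t ^ 3 = 10 := by
    apply RingOfIntegers.ext
    change algebraMap (𝓞 K) K (t ^ 3) = algebraMap (𝓞 K) K 10
    rw [map_pow, coe_num10]
    exact h
  obtain ⟨s, hs, hs3, hs2⟩ := cube_root_mod q hq hq9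
  let I : Ideal (𝓞 K) := Ideal.span {(q : 𝓞 K), t - (s : 𝓞 K)}
  obtain ⟨g, hg⟩ := (IsPrincipalIdealRing.principal I)
  have hg' : I = Ideal.span {g} := hg
  refine ⟨g, ?_⟩
  rw [← Ideal.absNorm_span_singleton, ← hg']
  have hqI : (q : 𝓞 K) ∈ I := Ideal.subset_span (by simp)
  have htI : t - (s : 𝓞 K) ∈ I := Ideal.subset_span (by simp)
  have d1 := Ideal.absNorm_dvd_norm_of_mem hqI
  have d2 := Ideal.absNorm_dvd_norm_of_mem htI
  have e1 : Algebra.norm ℤ (q : 𝓞 K) = (q : ℤ) ^ 3 :=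
    ring_int_norm (t : K) h hrank _ q 0 0 _ (by simp) (by push_cast; ring)
  have e2 : Algebra.norm ℤ (t - (s : 𝓞 K)) = 10 - s ^ 3 :=
    ring_int_norm (t : K) h hrank _ (-s) 1 0 _ (by simp [coe_num2]; ring) (by push_cast; ring)
  rw [e1] at d1
  rw [e2] at d2
  have d1' : Ideal.absNorm I ∣ q ^ 3 := by exact_mod_cast d1
  obtain ⟨k, hk, hkI⟩ := (Nat.dvd_prime_pow hq).mp d1'
  rw [hkI] at d2 ⊢
  have hk2 : k < 2 := by
    by_contra hh
    push Not at hh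
    apply hs2
    push_cast at d2
    exact (pow_dvd_pow _ hh).trans d2
  interval_cases k
  · exfalso
    rw [pow_zero, Ideal.absNorm_eq_one_iff] at hkI
    have h1 : (1 : 𝓞 K) ∈ I := by rw [hkI]; trivial
    obtain ⟨a, b, hab⟩ := Ideal.mem_span_pair.mp h1
    obtain ⟨m, hm⟩ := hs
    have hmO : (10 : 𝓞 K) - (s : 𝓞 K) ^ 3 = q * m := by exact_mod_cast congrArg (Int.cast : ℤ → 𝓞 K) hm
    have hkey : t ^ 2 + t * s + (s : 𝓞 K) ^ 2 =
        (q : ℤ) • (a * (t ^ 2 + t * s + (s : 𝓞 K) ^ 2) + b * m) := by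
      rw [zsmul_eq_mul]
      push_cast
      linear_combination (-(t ^ 2 + t * s + (s : 𝓞 K) ^ 2)) * hab + b * hO + b * hmO
    have e3 : Algebra.trace ℤ (𝓞 K) (t ^ 2 + t * s + (s : 𝓞 K) ^ 2) = 3 * s ^ 2 :=
      ring_int_trace (t : K) h hrank _ (s ^ 2) s 1 _ (by simp [coe_num2]; ring) (by push_cast; ring)
    rw [hkey, map_smul, smul_eq_mul] at e3
    exact hs3 ⟨_, e3.symm⟩
  · simp

/-- Let `q ≡ 8 (mod 9)` be prime and `K = ℚ(β)` the cubic field with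
`β³ = 4/5`. Then there is an element `ε` of the ring of integers of `K` with
`Norm_{K/ℚ}(ε) = −5q`. -/
theorem stmt_13 (q : ℕ) (hq : q.Prime) (hq9 : q % 9 = 8)
    (K : Type*) [Field K] [NumberField K] (β : K) (hβ : β ^ 3 = 4 / 5)
    (hrank : Module.finrank ℚ K = 3) :
    ∃ ε : NumberField.RingOfIntegers K,
      Algebra.norm ℚ (ε : K) = -(5 * q) := by
  have hθ : (5 / 2 * β ^ 2) ^ 3 = 10 := by
    linear_combination (125 / 8 : K) * (β ^ 3 + 4 / 5) * hβ
  have hw : ((1 + (5 / 2 * β ^ 2) + (5 / 2 * β ^ 2) ^ 2) / 3) ^ 3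
      = ((1 + (5 / 2 * β ^ 2) + (5 / 2 * β ^ 2) ^ 2) / 3) ^ 2
        + 3 * ((1 + (5 / 2 * β ^ 2) + (5 / 2 * β ^ 2) ^ 2) / 3) + 3 := by
    generalize 5 / 2 * β ^ 2 = t at hθ
    linear_combination (1/27 : K) * (t ^ 3 + 3 * t ^ 2 + 3 * t + 11) * hθ
  generalize 5 / 2 * β ^ 2 = θ at hθ hw
  have i1 : IsIntegral ℤ θ := by
    refine ⟨Polynomial.X ^ 3 - Polynomial.C 10,
      Polynomial.monic_X_pow_sub_C _ (by norm_num), ?_⟩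
    simp [hθ]
  have i2 : IsIntegral ℤ ((1 + θ + θ ^ 2) / 3) := by
    refine ⟨Polynomial.X ^ 3 - (Polynomial.X ^ 2 + 3 * Polynomial.X + 3), ?_, ?_⟩
    · monicity!
    · simp only [Polynomial.eval₂_sub, Polynomial.eval₂_add, Polynomial.eval₂_mul,
        Polynomial.eval₂_pow, Polynomial.eval₂_X, Polynomial.eval₂_ofNat]
      rw [hw]; ring
  let t : NumberField.RingOfIntegers K := ⟨θ, i1⟩
  let w : NumberField.RingOfIntegers K := ⟨(1 + θ + θ ^ 2) / 3, i2⟩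
  have ht : (t : K) = θ := rfl
  have hwv : (w : K) = (1 + θ + θ ^ 2) / 3 := rfl
  obtain ⟨g, hg⟩ := cub_exists_q hrank t w (by rw [ht, hθ])
    (by rw [ht, hwv]; field_simp) q hq hq9
  have n5 : Algebra.norm ℤ (5 + 2 * t + t ^ 2) = 5 :=
    ring_int_norm θ hθ hrank _ 5 2 1 _ (by simp [ht, coe_num2, coe_num3, coe_num5]) (by norm_num)
  have nm : Algebra.norm ℤ (-1 : NumberField.RingOfIntegers K) = -1 :=
    ring_int_norm θ hθ hrank _ (-1) 0 0 _ (by simp) (by norm_num)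
  have hfin : ∃ ε : NumberField.RingOfIntegers K, Algebra.norm ℤ ε = -(5 * q) := by
    rcases Int.natAbs_eq (Algebra.norm ℤ g) with hh | hh
    · refine ⟨-1 * ((5 + 2 * t + t ^ 2) * g), ?_⟩
      rw [map_mul, map_mul, n5, nm, hh, hg]; ring
    · refine ⟨(5 + 2 * t + t ^ 2) * g, ?_⟩
      rw [map_mul, n5, hh, hg]; ring
  obtain ⟨ε, hε⟩ := hfin
  refine ⟨ε, ?_⟩
  rw [← Algebra.coe_norm_int, hε]
  push_cast
  ring
end
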